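/- arXiv:1603.09218 — 4 statements merged into one kernel-verified Lean document; each statement's English description precedes it below -/
import Mathlib

section
/- Let 𝒜⁺ be the subalgebra of 𝒜 generated by P₁, P₂, Q₁, Q₂, R. The family of monomials Q₁^{a₁}Q₂^{a₂}R^{ε}P₁^{b₁}P₂^{b₂} with ε ∈ {0,1} and a₁, a₂, b₁, b₂ ∈ ℕ₀ is a ℂ-vector-space basis of 𝒜⁺; consequently, with the ℤ²-grading determined by deg P₁ = (0,1), deg P₂ = (0,2), deg Q₁ = (1,0), deg Q₂ = (2,0), deg R = (1,1), the dimension of the degree-(M,N) graded piece of 𝒜⁺ equals the number of tuples (a₁, a₂, b₁, b₂, ε) ∈ ℕ₀⁴ × {0,1} with a₁ + 2a₂ + ε = M and b₁ + 2b₂ + ε = N. -/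
noncomputable section

/-- Generators of the algebra `𝒜`: `P₁, P₂, P₂⁻¹, Q₁, Q₂, Q₂⁻¹, R`. -/
inductive AGen : Type
  | P1 | P2 | P2i | Q1 | Q2 | Q2i | R

abbrev FA : Type := FreeAlgebra ℂ AGen

def gA : AGen → FA := FreeAlgebra.ι ℂ

/-- The defining relations of the algebra `𝒜`. -/
inductive ARel (q t : ℂ) : FA → FA → Prop
  | P2P2i : ARel q t (gA .P2 * gA .P2i) 1
  | P2iP2 : ARel q t (gA .P2i * gA .P2) 1
  | Q2Q2i : ARel q t (gA .Q2 * gA .Q2i) 1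
  | Q2iQ2 : ARel q t (gA .Q2i * gA .Q2) 1
  | P2P1 : ARel q t (gA .P2 * gA .P1) (gA .P1 * gA .P2)
  | Q2Q1 : ARel q t (gA .Q2 * gA .Q1) (gA .Q1 * gA .Q2)
  | P2Q2 : ARel q t (gA .P2 * gA .Q2) ((q⁻¹ ^ 4) • (gA .Q2 * gA .P2))
  | P2Q1 : ARel q t (gA .P2 * gA .Q1) ((q⁻¹ ^ 2) • (gA .Q1 * gA .P2))
  | P1Q2 : ARel q t (gA .P1 * gA .Q2) ((q⁻¹ ^ 2) • (gA .Q2 * gA .P1))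
  | P1Q1 : ARel q t (gA .P1 * gA .Q1)
      (gA .Q1 * gA .P1 + (q⁻¹ ^ 2 - 1) • gA .R)
  | P2R : ARel q t (gA .P2 * gA .R) ((q⁻¹ ^ 2) • (gA .R * gA .P2))
  | RQ2 : ARel q t (gA .R * gA .Q2) ((q⁻¹ ^ 2) • (gA .Q2 * gA .R))
  | P1R : ARel q t (gA .P1 * gA .R)
      ((q⁻¹ ^ 2) • (gA .R * gA .P1) + (1 - q⁻¹ ^ 2) • (gA .Q1 * gA .P2))
  | RQ1 : ARel q t (gA .R * gA .Q1)
      ((q⁻¹ ^ 2) • (gA .Q1 * gA .R) + (1 - q⁻¹ ^ 2) • (gA .Q2 * gA .P1))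
  | RR : ARel q t (gA .R * gA .R)
      (((1 + t ^ 2) * (q⁻¹ ^ 2 + t⁻¹ ^ 2)) • (gA .Q2 * gA .P2)
        - (q⁻¹ ^ 2) • (gA .Q2 * gA .P1 * gA .P1)
        - (q⁻¹ ^ 2) • (gA .Q1 * gA .Q1 * gA .P2)
        + (q⁻¹ ^ 2) • (gA .Q1 * gA .R * gA .P1))

/-- The algebra `𝒜`. -/
abbrev AlgA (q t : ℂ) : Type := RingQuot (ARel q t)

variable (q t : ℂ)

def P1 : AlgA q t := RingQuot.mkAlgHom ℂ (ARel q t) (gA .P1)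
def P2 : AlgA q t := RingQuot.mkAlgHom ℂ (ARel q t) (gA .P2)
def P2i : AlgA q t := RingQuot.mkAlgHom ℂ (ARel q t) (gA .P2i)
def Q1 : AlgA q t := RingQuot.mkAlgHom ℂ (ARel q t) (gA .Q1)
def Q2 : AlgA q t := RingQuot.mkAlgHom ℂ (ARel q t) (gA .Q2)
def Q2i : AlgA q t := RingQuot.mkAlgHom ℂ (ARel q t) (gA .Q2i)
def R : AlgA q t := RingQuot.mkAlgHom ℂ (ARel q t) (gA .R)

/-- The image of a generator of `𝒜` in `𝒜`. -/
def genA (q t : ℂ) (x : AGen) : AlgA q t := RingQuot.mkAlgHom ℂ (ARel q t) (gA x)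

/-- The generators of the subalgebra `𝒜⁺`: `P₁, P₂, Q₁, Q₂, R`. -/
def plusGen : AGen → Prop
  | .P1 => True | .P2 => True | .Q1 => True | .Q2 => True | .R => True
  | _ => False

/-- First component (the `Q`-degree) of the ℤ²-degree of a generator:
`deg P₁ = (0,1)`, `deg P₂ = (0,2)`, `deg Q₁ = (1,0)`, `deg Q₂ = (2,0)`, `deg R = (1,1)`. -/
def aDeg1 : AGen → ℕ
  | .Q1 => 1 | .Q2 => 2 | .R => 1
  | _ => 0

/-- Second component (the `P`-degree) of the ℤ²-degree of a generator. -/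
def aDeg2 : AGen → ℕ
  | .P1 => 1 | .P2 => 2 | .R => 1
  | _ => 0

/-- The degree-`(M,N)` graded piece of `𝒜⁺`: the ℂ-span of all products of the
generators `P₁, P₂, Q₁, Q₂, R` of total degree `(M,N)`. -/
def aPiece (q t : ℂ) (M N : ℕ) : Submodule ℂ (AlgA q t) :=
  Submodule.span ℂ
    {x | ∃ w : List AGen, (∀ s ∈ w, plusGen s) ∧
      (w.map aDeg1).sum = M ∧ (w.map aDeg2).sum = N ∧ x = (w.map (genA q t)).prod}

/-- The PBW family `Q₁^{a₁}Q₂^{a₂}R^{ε}P₁^{b₁}P₂^{b₂}` of `𝒜⁺`, with all exponents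
in `ℕ₀`. -/
def pbwAplus (q t : ℂ) : ℕ × ℕ × Fin 2 × ℕ × ℕ → AlgA q t :=
  fun x => Q1 q t ^ x.1 * Q2 q t ^ x.2.1 * R q t ^ (x.2.2.1 : ℕ) *
    P1 q t ^ x.2.2.2.1 * P2 q t ^ x.2.2.2.2

/-!
The relations straighten every word in `P₁, P₂, Q₁, Q₂, R` to a combination of the monomials
`Q₁^{a₁}Q₂^{a₂}R^{ε}P₁^{b₁}P₂^{b₂}` of the same degree. For their independence, let `𝒜` act by
Macdonald's difference operators for `GL₂` in two variables: `Q₁, Q₂` multiply by the elementary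
symmetric functions `e₁, e₂`, `P₂` shifts both variables by `q⁻²`, and `P₁` and `R` are the first
Macdonald operator and its variant with weighted shifts. The variables run over the points
`((q⁻²)^m u, (q⁻²)^n v)`, and the operators act on functions of the index `(m, n)`; the two shifts
thus stay independent even when `q` is a root of unity. The leading shift of the operator of a PBW
monomial is `T^(ε + b₁ + b₂, b₂)`, with coefficient at the origin a nonzero multiple, depending only
on the shift, of `e₁^{a₁}e₂^{a₂}u^ε`. By triangularity only monomials with a common leading shift
have to be compared, and the products `e₁^{a₁}e₂^{a₂}u^ε` are linearly independent.
-/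

namespace AlgA

theorem linearIndependent_of_triangular {ι κ R V W : Type*} [PartialOrder κ] [Ring R]
    [AddCommGroup V] [Module R V] [AddCommGroup W] [Module R W] {v : ι → V} (deg : ι → κ)
    (L : κ → V →ₗ[R] W) (hL : ∀ k i, L k (v i) ≠ 0 → deg i ≤ k)
    (hind : ∀ k, LinearIndepOn R (fun i => L k (v i)) {i | deg i = k}) :
    LinearIndependent R v := by
  classical
  rw [linearIndependent_iff]
  intro l hl
  by_contra hne
  obtain ⟨k, hk⟩ :=
    (l.support.image deg).exists_minimal ((Finsupp.support_nonempty_iff.2 hne).image deg)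
  obtain ⟨i, hi, rfl⟩ := Finset.mem_image.1 hk.prop
  refine Finsupp.mem_support_iff.1 hi <|
    linearIndepOn_iff'.1 (hind (deg i)) (l.support.filter (deg · = deg i)) l
      (fun j hj => (Finset.mem_filter.1 hj).2) ?_ i (Finset.mem_filter.2 ⟨hi, rfl⟩)
  calc ∑ j ∈ l.support with deg j = deg i, l j • L (deg i) (v j)
      = ∑ j ∈ l.support, l j • L (deg i) (v j) := by
        refine Finset.sum_filter_of_ne fun j hj hj_ne => ?_
        have hdeg : deg j ≤ deg i := hL _ _ (right_ne_zero_of_smul hj_ne)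
        exact (hk.eq_of_ge (Finset.mem_image_of_mem deg hj) hdeg).symm
    _ = L (deg i) (Finsupp.linearCombination R v l) := by
        simp only [Finsupp.linearCombination_apply, Finsupp.sum, map_sum, map_smul]
    _ = 0 := by rw [hl, map_zero]

section DifferenceOperators

variable {G K : Type*} [AddCommGroup G] [CommRing K]

/-- The difference operator `f · T^d` acting on functions on an additive group, where
`(T^d φ) p = φ (p + d)`. -/
def diffOp (f : G → K) (d : G) : Module.End K (G → K) where
  toFun φ p := f p * φ (p + d)
  map_add' φ ψ := by ext p; simp only [Pi.add_apply, mul_add]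
  map_smul' c φ := by ext p; simp only [Pi.smul_apply, smul_eq_mul, RingHom.id_apply, mul_left_comm]

@[simp]
theorem diffOp_apply (f : G → K) (d : G) (φ : G → K) (p : G) :
    diffOp f d φ p = f p * φ (p + d) := rfl

theorem diffOp_mul_diffOp (f g : G → K) (d e : G) :
    diffOp f d * diffOp g e = diffOp (fun p => f p * g (p + d)) (d + e) := by
  ext φ p
  simp only [Module.End.mul_apply, diffOp_apply, mul_assoc, add_assoc]

theorem diffOp_one_zero : diffOp (1 : G → K) 0 = 1 := by
  ext φ p
  simp only [diffOp_apply, Pi.one_apply, one_mul, add_zero, Module.End.one_apply]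

theorem diffOp_zero_mul_diffOp_zero (f g : G → K) :
    diffOp f 0 * diffOp g 0 = diffOp (f * g) 0 := by
  simp only [diffOp_mul_diffOp, add_zero]; rfl

theorem diffOp_one_mul_diffOp_one (d e : G) :
    diffOp (1 : G → K) d * diffOp 1 e = diffOp 1 (d + e) := by
  simp only [diffOp_mul_diffOp, Pi.one_apply, mul_one]; rfl

theorem diffOp_zero_pow (f : G → K) (k : ℕ) : diffOp f 0 ^ k = diffOp (f ^ k) 0 := by
  induction k with
  | zero => rw [pow_zero, pow_zero, diffOp_one_zero]
  | succ k ih => rw [pow_succ, ih, diffOp_zero_mul_diffOp_zero, ← pow_succ]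

theorem diffOp_one_pow (d : G) (k : ℕ) : diffOp (1 : G → K) d ^ k = diffOp 1 (k • d) := by
  induction k with
  | zero => rw [pow_zero, zero_smul, diffOp_one_zero]
  | succ k ih => rw [pow_succ, ih, diffOp_one_mul_diffOp_one, ← succ_nsmul]

end DifferenceOperators

section MacdonaldOperators

variable {K : Type*} [Field K]

/-- The coefficient `(τ⁻¹X - τY) / (X - Y)` of the Macdonald difference operator for `GL₂`. -/
def macdonaldCoeff (τ X Y : K) : K := (τ⁻¹ * X - τ * Y) / (X - Y)

/-- The first elementary symmetric function in the coordinates `x m`, `y n`. -/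
def e₁ (x y : ℤ → K) : ℤ × ℤ → K := fun p => x p.1 + y p.2

/-- The second elementary symmetric function in the coordinates `x m`, `y n`. -/
def e₂ (x y : ℤ → K) : ℤ × ℤ → K := fun p => x p.1 * y p.2

/-- The Macdonald difference operator for `GL₂` with each shift weighted by the `k`-th power of the
shifted coordinate. It represents `P₁` for `k = 0` and `R` for `k = 1`. -/
def macdonaldOp (τ : K) (x y : ℤ → K) (k : ℕ) : Module.End K (ℤ × ℤ → K) :=
  diffOp (fun p => macdonaldCoeff τ (x p.1) (y p.2) * x p.1 ^ k) (1, 0) +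
    diffOp (fun p => macdonaldCoeff τ (y p.2) (x p.1) * y p.2 ^ k) (0, 1)

theorem macdonaldCoeff_mul_mul {s : K} (hs : s ≠ 0) (τ X Y : K) :
    macdonaldCoeff τ (s * X) (s * Y) = macdonaldCoeff τ X Y := by
  rw [macdonaldCoeff, macdonaldCoeff, ← mul_div_mul_left (τ⁻¹ * X - τ * Y) (X - Y) hs]
  congr 1 <;> ring

theorem macdonaldCoeff_mul_sub {X Y : K} (h : X ≠ Y) (τ : K) :
    macdonaldCoeff τ X Y * (X - Y) = τ⁻¹ * X - τ * Y :=
  div_mul_cancel₀ _ (sub_ne_zero.2 h)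

theorem macdonaldCoeff_exchange {τ s X Y : K} (hτ : τ ≠ 0) (h : X ≠ Y) (hX : s * X ≠ Y)
    (hY : X ≠ s * Y) :
    macdonaldCoeff τ X Y * macdonaldCoeff τ Y (s * X) * (Y - s * X) +
        macdonaldCoeff τ Y X * macdonaldCoeff τ X (s * Y) * (X - s * Y) =
      (1 - s) * (X + Y) := by
  have cleared : macdonaldCoeff τ X Y * (τ⁻¹ * Y - τ * (s * X)) +
      macdonaldCoeff τ Y X * (τ⁻¹ * X - τ * (s * Y)) = (1 - s) * (X + Y) := by
    have hsub := sub_ne_zero.2 h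
    rw [macdonaldCoeff, macdonaldCoeff, ← neg_sub X Y]
    field_simp
    ring
  linear_combination cleared + macdonaldCoeff τ X Y * macdonaldCoeff_mul_sub hX.symm τ +
    macdonaldCoeff τ Y X * macdonaldCoeff_mul_sub hY τ

theorem macdonaldCoeff_quadratic {τ s X Y : K} (hτ : τ ≠ 0) (h : X ≠ Y) (hX : s * X ≠ Y)
    (hY : X ≠ s * Y) :
    macdonaldCoeff τ X Y * macdonaldCoeff τ Y (s * X) * (X * (Y - s * X)) +
        macdonaldCoeff τ Y X * macdonaldCoeff τ X (s * Y) * (Y * (X - s * Y)) =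
      (1 + τ ^ 2) * (s + τ⁻¹ ^ 2) * (X * Y) - s * (X + Y) ^ 2 := by
  have cleared : macdonaldCoeff τ X Y * (τ⁻¹ * Y - τ * (s * X)) * X +
      macdonaldCoeff τ Y X * (τ⁻¹ * X - τ * (s * Y)) * Y =
        (1 + τ ^ 2) * (s + τ⁻¹ ^ 2) * (X * Y) - s * (X + Y) ^ 2 := by
    have hsub := sub_ne_zero.2 h
    rw [macdonaldCoeff, macdonaldCoeff, ← neg_sub X Y]
    field_simp
    ring
  linear_combination cleared + macdonaldCoeff τ X Y * X * macdonaldCoeff_mul_sub hX.symm τ +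
    macdonaldCoeff τ Y X * Y * macdonaldCoeff_mul_sub hY τ

variable {s τ : K} {x y : ℤ → K}

theorem diffOp_e₂_mul_diffOp_e₁ :
    diffOp (e₂ x y) 0 * diffOp (e₁ x y) 0 = diffOp (e₁ x y) 0 * diffOp (e₂ x y) 0 := by
  rw [diffOp_zero_mul_diffOp_zero, diffOp_zero_mul_diffOp_zero, mul_comm]

theorem macdonaldOp_add_two (k : ℕ) :
    macdonaldOp τ x y (k + 2) =
      diffOp (e₁ x y) 0 * macdonaldOp τ x y (k + 1) - diffOp (e₂ x y) 0 * macdonaldOp τ x y k := by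
  ext φ p
  simp only [macdonaldOp, LinearMap.add_apply, Pi.add_apply, diffOp_apply, LinearMap.sub_apply,
    Module.End.mul_apply, map_add, Pi.sub_apply, e₁, add_zero, e₂]
  ring

section Geometric

variable (hx : ∀ m, x (m + 1) = s * x m) (hy : ∀ n, y (n + 1) = s * y n)
include hx hy

theorem diffOp_one_mul_diffOp_e₁ :
    diffOp 1 (1, 1) * diffOp (e₁ x y) 0 = s • (diffOp (e₁ x y) 0 * diffOp 1 (1, 1)) := by
  ext φ p
  simp only [Module.End.mul_apply, diffOp_apply, Pi.one_apply, e₁, Prod.fst_add, hx, Prod.snd_add,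
    hy, add_zero, one_mul, LinearMap.smul_apply, Pi.smul_apply, smul_eq_mul]
  ring

theorem diffOp_one_mul_diffOp_e₂ :
    diffOp 1 (1, 1) * diffOp (e₂ x y) 0 = s ^ 2 • (diffOp (e₂ x y) 0 * diffOp 1 (1, 1)) := by
  ext φ p
  simp only [Module.End.mul_apply, diffOp_apply, Pi.one_apply, e₂, Prod.fst_add, hx, Prod.snd_add,
    hy, add_zero, one_mul, LinearMap.smul_apply, Pi.smul_apply, smul_eq_mul]
  ring

theorem macdonaldOp_mul_diffOp_e₁ (k : ℕ) :
    macdonaldOp τ x y k * diffOp (e₁ x y) 0 =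
      diffOp (e₁ x y) 0 * macdonaldOp τ x y k + (s - 1) • macdonaldOp τ x y (k + 1) := by
  ext φ p
  simp only [macdonaldOp, Module.End.mul_apply, LinearMap.add_apply, Pi.add_apply, diffOp_apply, e₁,
    Prod.fst_add, hx, Prod.snd_add, add_zero, hy, smul_add, map_add, LinearMap.smul_apply,
    Pi.smul_apply, smul_eq_mul]
  ring

theorem macdonaldOp_mul_diffOp_e₂ (k : ℕ) :
    macdonaldOp τ x y k * diffOp (e₂ x y) 0 = s • (diffOp (e₂ x y) 0 * macdonaldOp τ x y k) := by
  ext φ p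
  simp only [macdonaldOp, Module.End.mul_apply, LinearMap.add_apply, Pi.add_apply, diffOp_apply, e₂,
    Prod.fst_add, hx, Prod.snd_add, add_zero, hy, LinearMap.smul_apply, map_add, Pi.smul_apply,
    smul_eq_mul]
  ring

theorem diffOp_one_mul_macdonaldOp (hs : s ≠ 0) (k : ℕ) :
    diffOp 1 (1, 1) * macdonaldOp τ x y k = s ^ k • (macdonaldOp τ x y k * diffOp 1 (1, 1)) := by
  ext φ p
  simp only [macdonaldOp, Module.End.mul_apply, LinearMap.add_apply, diffOp_apply, Pi.one_apply,
    Pi.add_apply, Prod.fst_add, hx, Prod.snd_add, hy, macdonaldCoeff_mul_mul hs, add_assoc,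
    Prod.mk_add_mk, Int.reduceAdd, add_zero, one_mul, LinearMap.smul_apply, Pi.smul_apply, zero_add,
    smul_eq_mul]
  ring

theorem macdonaldOp_one_mul_diffOp_e₁ :
    macdonaldOp τ x y 1 * diffOp (e₁ x y) 0 =
      s • (diffOp (e₁ x y) 0 * macdonaldOp τ x y 1) +
        (1 - s) • (diffOp (e₂ x y) 0 * macdonaldOp τ x y 0) := by
  rw [macdonaldOp_mul_diffOp_e₁ hx hy, macdonaldOp_add_two]
  module

variable (hτ : τ ≠ 0) (hxy : ∀ m n, x m ≠ y n)
include hτ hxy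

theorem macdonaldOp_zero_mul_macdonaldOp_one :
    macdonaldOp τ x y 0 * macdonaldOp τ x y 1 =
      s • (macdonaldOp τ x y 1 * macdonaldOp τ x y 0) +
        (1 - s) • (diffOp (e₁ x y) 0 * diffOp 1 (1, 1)) := by
  ext φ ⟨m, n⟩
  have exchange := macdonaldCoeff_exchange hτ (hxy m n) (hx m ▸ hxy (m + 1) n)
    (hy n ▸ hxy m (n + 1))
  simp only [macdonaldOp, pow_zero, mul_one, pow_one, Module.End.mul_apply, LinearMap.add_apply,
    map_add, Pi.add_apply, diffOp_apply, Prod.mk_add_mk, add_zero, hx, hy, LinearMap.smul_apply,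
    smul_add, Pi.smul_apply, smul_eq_mul, e₁, Pi.one_apply, one_mul]
  linear_combination φ (m + 1, n + 1) * exchange

theorem macdonaldOp_one_mul_macdonaldOp_one :
    macdonaldOp τ x y 1 * macdonaldOp τ x y 1 =
      ((1 + τ ^ 2) * (s + τ⁻¹ ^ 2)) • (diffOp (e₂ x y) 0 * diffOp 1 (1, 1))
        - s • (diffOp (e₂ x y) 0 * macdonaldOp τ x y 0 * macdonaldOp τ x y 0)
        - s • (diffOp (e₁ x y) 0 * diffOp (e₁ x y) 0 * diffOp 1 (1, 1))
        + s • (diffOp (e₁ x y) 0 * macdonaldOp τ x y 1 * macdonaldOp τ x y 0) := by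
  ext φ ⟨m, n⟩
  have quadratic := macdonaldCoeff_quadratic hτ (hxy m n) (hx m ▸ hxy (m + 1) n)
    (hy n ▸ hxy m (n + 1))
  simp only [macdonaldOp, pow_one, Module.End.mul_apply, LinearMap.add_apply, map_add, Pi.add_apply,
    diffOp_apply, Prod.mk_add_mk, add_zero, hx, hy, pow_zero, mul_one, LinearMap.sub_apply,
    LinearMap.smul_apply, smul_add, Pi.sub_apply, Pi.smul_apply, e₂, Pi.one_apply, one_mul,
    smul_eq_mul, e₁]
  linear_combination φ (m + 1, n + 1) * quadratic

end Geometric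
end MacdonaldOperators

section Representation

/-- The operators representing the generators of `𝒜`. -/
def genOp {K : Type*} [Field K] (τ : K) (x y : ℤ → K) : AGen → Module.End K (ℤ × ℤ → K)
  | .P1 => macdonaldOp τ x y 0
  | .P2 => diffOp 1 (1, 1)
  | .P2i => diffOp 1 (-1, -1)
  | .Q1 => diffOp (e₁ x y) 0
  | .Q2 => diffOp (e₂ x y) 0
  | .Q2i => diffOp (e₂ x y)⁻¹ 0
  | .R => macdonaldOp τ x y 1

variable {K : Type*} [Field K] [Algebra ℂ K] {q t} {x y : ℤ → K}

theorem lift_genOp_eq_of_rel (hq : q ≠ 0) (ht : t ≠ 0)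
    (hx : ∀ m, x (m + 1) = algebraMap ℂ K (q⁻¹ ^ 2) * x m)
    (hy : ∀ n, y (n + 1) = algebraMap ℂ K (q⁻¹ ^ 2) * y n)
    (hx0 : ∀ m, x m ≠ 0) (hy0 : ∀ n, y n ≠ 0) (hxy : ∀ m n, x m ≠ y n) {a b : FA}
    (h : ARel q t a b) :
    FreeAlgebra.lift ℂ (genOp (algebraMap ℂ K t) x y) a =
      FreeAlgebra.lift ℂ (genOp (algebraMap ℂ K t) x y) b := by
  have hs : algebraMap ℂ K (q⁻¹ ^ 2) ≠ 0 := (map_ne_zero _).2 (pow_ne_zero 2 (inv_ne_zero hq))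
  have hτ : algebraMap ℂ K t ≠ 0 := (map_ne_zero _).2 ht
  have he₂ : e₂ x y * (e₂ x y)⁻¹ = 1 := funext fun p =>
    mul_inv_cancel₀ (mul_ne_zero (hx0 p.1) (hy0 p.2))
  have hq4 : q⁻¹ ^ 4 = (q⁻¹ ^ 2) ^ 2 := by rw [← pow_mul]
  cases h <;>
    simp only [gA, hq4, map_mul, map_add, map_sub, map_smul, map_one, FreeAlgebra.lift_ι_apply,
      genOp, ← algebraMap_smul K (_ : ℂ) (_ : Module.End K (ℤ × ℤ → K))]
  case P2P2i | P2iP2 => exact (diffOp_one_mul_diffOp_one _ _).trans diffOp_one_zero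
  case Q2Q2i => rw [diffOp_zero_mul_diffOp_zero, he₂, diffOp_one_zero]
  case Q2iQ2 => rw [diffOp_zero_mul_diffOp_zero, mul_comm, he₂, diffOp_one_zero]
  case P2P1 => simpa only [pow_zero, one_smul] using diffOp_one_mul_macdonaldOp hx hy hs 0
  case Q2Q1 => exact diffOp_e₂_mul_diffOp_e₁
  case P2Q2 => simpa only [map_pow] using diffOp_one_mul_diffOp_e₂ hx hy
  case P2Q1 => exact diffOp_one_mul_diffOp_e₁ hx hy
  case P1Q2 => exact macdonaldOp_mul_diffOp_e₂ hx hy 0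
  case P1Q1 => simpa using macdonaldOp_mul_diffOp_e₁ hx hy 0
  case P2R => simpa only [pow_one] using diffOp_one_mul_macdonaldOp hx hy hs 1
  case RQ2 => exact macdonaldOp_mul_diffOp_e₂ hx hy 1
  case P1R => simpa using macdonaldOp_zero_mul_macdonaldOp_one hx hy hτ hxy
  case RQ1 => simpa using macdonaldOp_one_mul_diffOp_e₁ hx hy
  case RR => simpa using macdonaldOp_one_mul_macdonaldOp_one hx hy hτ hxy

theorem exists_macdonaldRep (hq : q ≠ 0) (ht : t ≠ 0)
    (hx : ∀ m, x (m + 1) = algebraMap ℂ K (q⁻¹ ^ 2) * x m)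
    (hy : ∀ n, y (n + 1) = algebraMap ℂ K (q⁻¹ ^ 2) * y n)
    (hx0 : ∀ m, x m ≠ 0) (hy0 : ∀ n, y n ≠ 0) (hxy : ∀ m n, x m ≠ y n) :
    ∃ ρ : AlgA q t →ₐ[ℂ] Module.End K (ℤ × ℤ → K),
      ∀ g, ρ (genA q t g) = genOp (algebraMap ℂ K t) x y g :=
  ⟨RingQuot.liftAlgHom ℂ ⟨FreeAlgebra.lift ℂ (genOp (algebraMap ℂ K t) x y),
    fun _ _ h => lift_genOp_eq_of_rel hq ht hx hy hx0 hy0 hxy h⟩, fun g => by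
      rw [genA, RingQuot.liftAlgHom_mkAlgHom_apply, gA, FreeAlgebra.lift_ι_apply]⟩

end Representation

section LeadingCoefficient

variable {K : Type*} [Field K] {τ : K} {x y : ℤ → K} {φ : ℤ × ℤ → K}

theorem macdonaldOp_apply_of_pos (hφ : ∀ m n, 0 < n → φ (m, n) = 0) (k : ℕ) (m n : ℤ)
    (hn : 0 < n) : macdonaldOp τ x y k φ (m, n) = 0 := by
  simp [macdonaldOp, hφ _ _ hn, hφ _ (n + 1) (by omega)]

theorem macdonaldOp_apply_zero (hφ : ∀ m n, 0 < n → φ (m, n) = 0) (k : ℕ) (m : ℤ) :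
    macdonaldOp τ x y k φ (m, 0) =
      macdonaldCoeff τ (x m) (y 0) * x m ^ k * φ (m + 1, 0) := by
  simp [macdonaldOp, hφ _ 1 one_pos]

theorem macdonaldOp_pow_apply_of_pos (hφ : ∀ m n, 0 < n → φ (m, n) = 0) (k r : ℕ) (m n : ℤ)
    (hn : 0 < n) : (macdonaldOp τ x y k ^ r) φ (m, n) = 0 := by
  induction r generalizing φ with
  | zero => exact hφ m n hn
  | succ r ih =>
    rw [pow_succ, Module.End.mul_apply]
    exact ih (macdonaldOp_apply_of_pos hφ k)

theorem macdonaldOp_pow_apply_zero (hφ : ∀ m n, 0 < n → φ (m, n) = 0) (k r : ℕ) (m : ℤ) :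
    (macdonaldOp τ x y k ^ r) φ (m, 0) =
      (∏ i ∈ Finset.range r, macdonaldCoeff τ (x (m + i)) (y 0) * x (m + i) ^ k) *
        φ (m + r, 0) := by
  induction r generalizing φ with
  | zero => simp
  | succ r ih =>
    rw [pow_succ, Module.End.mul_apply, ih (macdonaldOp_apply_of_pos hφ k),
      macdonaldOp_apply_zero hφ, Finset.prod_range_succ, Nat.cast_succ, add_assoc]
    ring

theorem macdonaldOp_one_pow_macdonaldOp_zero_pow_apply (hφ : ∀ m n, 0 < n → φ (m, n) = 0)
    (ε : Fin 2) (b : ℕ) :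
    (macdonaldOp τ x y 1 ^ (ε : ℕ)) ((macdonaldOp τ x y 0 ^ b) φ) (0, 0) =
      (∏ i ∈ Finset.range (ε + b), macdonaldCoeff τ (x i) (y 0)) * x 0 ^ (ε : ℕ) *
        φ (ε + b, 0) := by
  have hx_pow : ∏ i ∈ Finset.range (ε : ℕ), x i = x 0 ^ (ε : ℕ) := by fin_cases ε <;> simp
  rw [macdonaldOp_pow_apply_zero (macdonaldOp_pow_apply_of_pos hφ 0 b),
    macdonaldOp_pow_apply_zero hφ, Finset.prod_range_add, ← hx_pow]
  simp only [zero_add, pow_one, pow_zero, mul_one, Finset.prod_mul_distrib, Nat.cast_add]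
  ring

/-- The operator representing the PBW monomial with exponents `(a₁, a₂, ε, b₁, b₂)`. -/
def pbwOp (τ : K) (x y : ℤ → K) (z : ℕ × ℕ × Fin 2 × ℕ × ℕ) : Module.End K (ℤ × ℤ → K) :=
  diffOp (e₁ x y) 0 ^ z.1 * diffOp (e₂ x y) 0 ^ z.2.1 * macdonaldOp τ x y 1 ^ (z.2.2.1 : ℕ) *
    macdonaldOp τ x y 0 ^ z.2.2.2.1 * diffOp 1 (1, 1) ^ z.2.2.2.2

/-- The coefficient of the shift `T^d` in a difference operator, evaluated at the origin. -/
def shiftCoeff (d : ℤ × ℤ) : Module.End K (ℤ × ℤ → K) →ₗ[K] K :=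
  LinearMap.proj 0 ∘ₗ LinearMap.applyₗ (Pi.single d 1)

theorem shiftCoeff_pbwOp {i j : ℤ} (z : ℕ × ℕ × Fin 2 × ℕ × ℕ) (hj : j ≤ z.2.2.2.2) :
    shiftCoeff (i, j) (pbwOp τ x y z) =
      if j = z.2.2.2.2 ∧ i = z.2.2.1 + z.2.2.2.1 + z.2.2.2.2 then
        (∏ k ∈ Finset.range (z.2.2.1 + z.2.2.2.1), macdonaldCoeff τ (x k) (y 0)) *
          ((x 0 + y 0) ^ z.1 * (x 0 * y 0) ^ z.2.1 * x 0 ^ (z.2.2.1 : ℕ))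
      else 0 := by
  obtain ⟨a₁, a₂, ε, b₁, b₂⟩ := z
  dsimp only at hj ⊢
  set φ : ℤ × ℤ → K := (diffOp 1 (1, 1) ^ b₂) (Pi.single (i, j) 1) with hφ_def
  have hφ_apply (m n : ℤ) : φ (m, n) = if j = n + b₂ ∧ i = m + b₂ then 1 else 0 := by
    simp [hφ_def, diffOp_one_pow, Pi.single_apply, and_comm, eq_comm]
  have hφ (m n : ℤ) (hn : 0 < n) : φ (m, n) = 0 := by
    rw [hφ_apply, if_neg (by omega)]
  calc shiftCoeff (i, j) (pbwOp τ x y (a₁, a₂, ε, b₁, b₂))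
      = (x 0 + y 0) ^ a₁ * ((x 0 * y 0) ^ a₂ *
          (macdonaldOp τ x y 1 ^ (ε : ℕ)) ((macdonaldOp τ x y 0 ^ b₁) φ) (0, 0)) := by
        simp only [shiftCoeff, pbwOp, diffOp_zero_pow, Module.End.mul_apply, LinearMap.comp_apply,
          LinearMap.applyₗ_apply_apply, LinearMap.proj_apply, diffOp_apply, add_zero, Pi.pow_apply,
          e₁, e₂, Prod.fst_zero, Prod.snd_zero, hφ_def, Prod.mk_zero_zero]
    _ = _ := by
        rw [macdonaldOp_one_pow_macdonaldOp_zero_pow_apply hφ, hφ_apply, zero_add, ite_and, ite_and]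
        split_ifs <;> ring

end LeadingCoefficient

section LinearIndependence

section Polynomial

open Polynomial

theorem linearIndependent_X_pow (S : Type*) [CommRing S] :
    LinearIndependent S fun n : ℕ => (X : S[X]) ^ n := by
  simpa only [coe_basisMonomials, monomial_one_right_eq_X_pow] using
    (basisMonomials S).linearIndependent

theorem linearIndependent_C_mul_of_monic {ι S A : Type*} [CommRing S] [CommRing A] [Algebra S A]
    {f : ι → A} {g : ι → A[X]} (hg : ∀ i, (g i).Monic)
    (hf : ∀ d, LinearIndepOn S f {i | (g i).natDegree = d}) :
    LinearIndependent S fun i => C (f i) * g i := by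
  refine linearIndependent_of_triangular (fun i => OrderDual.toDual (g i).natDegree)
    (fun d => (lcoeff A (OrderDual.ofDual d)).restrictScalars S) (fun d i hd => ?_)
    (fun d => (hf (OrderDual.ofDual d)).congr ?_)
  · exact (le_natDegree_of_ne_zero hd).trans (natDegree_C_mul_le _ _)
  · rintro i (hi : (g i).natDegree = OrderDual.ofDual d)
    simp only [LinearMap.restrictScalars_apply, lcoeff_apply, coeff_C_mul, ← hi,
      (hg i).coeff_natDegree, mul_one]

theorem linearIndependent_polynomialFamily (S : Type*) [CommRing S] [Nontrivial S] :
    LinearIndependent S fun i : ℕ × ℕ × Fin 2 =>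
      (X + (C X - X) : S[X][X]) ^ i.1 * (X * (C X - X)) ^ i.2.1 * X ^ (i.2.2 : ℕ) := by
  have hfamily (i : ℕ × ℕ × Fin 2) :
      (X + (C X - X) : S[X][X]) ^ i.1 * (X * (C X - X)) ^ i.2.1 * X ^ (i.2.2 : ℕ) =
        C ((-1 : Sˣ) ^ i.2.1 • X ^ i.1) * ((X - C X) ^ i.2.1 * X ^ (i.2.1 + i.2.2 : ℕ)) := by
    have hneg : (C X - X : S[X][X]) = -1 * (X - C X) := by ring
    rw [add_sub_cancel, hneg, Units.smul_def, smul_eq_C_mul, C_mul, Units.val_pow_eq_pow_val,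
      Units.val_neg, Units.val_one, C_pow, C_pow, C_pow, C_neg, C_neg, C_1, C_1, mul_pow, mul_pow,
      pow_add]
    ring
  have hmonic (i : ℕ × ℕ × Fin 2) : ((X - C X : S[X][X]) ^ i.2.1).Monic :=
    (monic_X_sub_C _).pow _
  have hdeg (i : ℕ × ℕ × Fin 2) :
      ((X - C X : S[X][X]) ^ i.2.1 * X ^ (i.2.1 + i.2.2 : ℕ)).natDegree =
        i.2.1 + (i.2.1 + i.2.2) := by
    rw [(hmonic i).natDegree_mul (monic_X_pow _), (monic_X_sub_C _).natDegree_pow,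
      natDegree_X_sub_C, mul_one, natDegree_X_pow]
  simp only [hfamily]
  refine linearIndependent_C_mul_of_monic (fun i => (hmonic i).mul (monic_X_pow _)) fun d => ?_
  have hinj : Set.InjOn Prod.fst {i : ℕ × ℕ × Fin 2 |
      ((X - C X : S[X][X]) ^ i.2.1 * X ^ (i.2.1 + i.2.2 : ℕ)).natDegree = d} := by
    rintro ⟨a, b, e⟩ h ⟨a', b', e'⟩ h' rfl
    replace h := (hdeg _).symm.trans h
    replace h' := (hdeg _).symm.trans h'
    dsimp only at h h'
    simp only [Prod.mk.injEq, true_and]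
    omega
  exact ((linearIndependent_X_pow S).comp _ hinj.injective).units_smul
    fun i => (-1) ^ (i : ℕ × ℕ × Fin 2).2.1

end Polynomial

variable {K : Type*} [Field K] [Algebra ℂ K] {q t}

theorem macdonaldCoeff_smul_ne_zero {u v : K} (huv : LinearIndependent ℂ ![u, v]) (ht : t ≠ 0)
    {c : ℂ} (hc : c ≠ 0) : macdonaldCoeff (algebraMap ℂ K t) (c • u) v ≠ 0 := by
  have hne {α β : ℂ} (hα : α ≠ 0) : α • u - β • v ≠ 0 := fun h =>
    hα (LinearIndependent.pair_iff.1 huv α (-β) (by rwa [neg_smul, ← sub_eq_add_neg])).1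
  refine div_ne_zero ?_ (by simpa only [one_smul] using hne (β := 1) hc)
  rw [← map_inv₀, ← Algebra.smul_def, smul_smul, ← Algebra.smul_def]
  exact hne (mul_ne_zero (inv_ne_zero ht) hc)

theorem exists_pbwRep (hq : q ≠ 0) (ht : t ≠ 0) {u v : K} (huv : LinearIndependent ℂ ![u, v]) :
    ∃ ρ : AlgA q t →ₐ[ℂ] Module.End K (ℤ × ℤ → K), ∀ z, ρ (pbwAplus q t z) =
      pbwOp (algebraMap ℂ K t) (fun m => (q⁻¹ ^ 2) ^ m • u) (fun n => (q⁻¹ ^ 2) ^ n • v) z := by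
  have hs : q⁻¹ ^ 2 ≠ 0 := pow_ne_zero 2 (inv_ne_zero hq)
  have hsz (m : ℤ) : (q⁻¹ ^ 2) ^ m ≠ 0 := zpow_ne_zero m hs
  have hgeom (w : K) (m : ℤ) :
      (q⁻¹ ^ 2) ^ (m + 1) • w = algebraMap ℂ K (q⁻¹ ^ 2) * (q⁻¹ ^ 2) ^ m • w := by
    rw [zpow_add_one₀ hs, mul_comm, mul_smul, Algebra.smul_def (q⁻¹ ^ 2)]
  have hu : u ≠ 0 := huv.ne_zero 0
  have hv : v ≠ 0 := huv.ne_zero 1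
  have hxy (m n : ℤ) : (q⁻¹ ^ 2) ^ m • u ≠ (q⁻¹ ^ 2) ^ n • v := fun h =>
    hsz m (LinearIndependent.pair_iff.1 huv _ (-(q⁻¹ ^ 2) ^ n)
      (by rw [h, neg_smul, add_neg_cancel])).1
  obtain ⟨ρ, hρ⟩ := exists_macdonaldRep hq ht (hgeom u) (hgeom v)
    (fun m => smul_ne_zero (hsz m) hu) (fun n => smul_ne_zero (hsz n) hv) hxy
  have hP₁ : ρ (P1 q t) = _ := hρ .P1
  have hP₂ : ρ (P2 q t) = _ := hρ .P2
  have hQ₁ : ρ (Q1 q t) = _ := hρ .Q1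
  have hQ₂ : ρ (Q2 q t) = _ := hρ .Q2
  have hR : ρ (R q t) = _ := hρ .R
  exact ⟨ρ, fun z => by
    simp only [pbwAplus, map_mul, map_pow, hP₁, hP₂, hQ₁, hQ₂, hR, genOp, pbwOp]⟩

/-- The exponents of the leading shift `T^(ε + b₁ + b₂, b₂)` of the operator representing a PBW
monomial, encoded as `(b₂, ε + b₁)` in the order in which the PBW family is triangular. -/
def pbwDeg (z : ℕ × ℕ × Fin 2 × ℕ × ℕ) : ℕ ×ₗ ℕ :=
  toLex (z.2.2.2.2, z.2.2.1 + z.2.2.2.1)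

theorem exists_pbwLeadingCoeff (hq : q ≠ 0) (ht : t ≠ 0) {u v : K}
    (huv : LinearIndependent ℂ ![u, v]) :
    ∃ (L : ℕ ×ₗ ℕ → AlgA q t →ₗ[ℂ] K) (c : ℕ → K), (∀ n, c n ≠ 0) ∧
      ∀ k z, (ofLex k).1 ≤ (ofLex (pbwDeg z)).1 → L k (pbwAplus q t z) =
        if pbwDeg z = k then c (ofLex k).2 *
          ((u + v) ^ z.1 * (u * v) ^ z.2.1 * u ^ (z.2.2.1 : ℕ)) else 0 := by
  obtain ⟨ρ, hρ⟩ := exists_pbwRep hq ht huv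
  refine ⟨fun k => (shiftCoeff (((ofLex k).2 + (ofLex k).1 : ℤ),
      ((ofLex k).1 : ℤ))).restrictScalars ℂ ∘ₗ ρ.toLinearMap,
    fun n => ∏ i ∈ Finset.range n,
      macdonaldCoeff (algebraMap ℂ K t) ((q⁻¹ ^ 2) ^ (i : ℤ) • u) v,
    fun n => Finset.prod_ne_zero_iff.2 fun i _ => macdonaldCoeff_smul_ne_zero huv ht
      (zpow_ne_zero i (pow_ne_zero 2 (inv_ne_zero hq))),
    fun k z hk => ?_⟩
  have hdeg : pbwDeg z = k ↔ ((ofLex k).1 : ℤ) = z.2.2.2.2 ∧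
      ((ofLex k).2 + (ofLex k).1 : ℤ) = z.2.2.1 + z.2.2.2.1 + z.2.2.2.2 := by
    rw [pbwDeg, ← ofLex_inj, ofLex_toLex, Prod.ext_iff]
    omega
  change shiftCoeff _ (ρ (pbwAplus q t z)) = _
  rw [hρ, shiftCoeff_pbwOp z (by exact_mod_cast hk)]
  simp only [zpow_zero, one_smul, ← hdeg]
  refine if_ctx_congr Iff.rfl (fun h => ?_) fun _ => rfl
  rw [← h]
  rfl

theorem linearIndependent_pbwAplus_of_linearIndependent (hq : q ≠ 0) (ht : t ≠ 0) {u v : K}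
    (hfam : LinearIndependent ℂ fun i : ℕ × ℕ × Fin 2 =>
      (u + v) ^ i.1 * (u * v) ^ i.2.1 * u ^ (i.2.2 : ℕ)) :
    LinearIndependent ℂ (pbwAplus q t) := by
  have huv : LinearIndependent ℂ ![u, v] := by
    have hpair : (fun i : ℕ × ℕ × Fin 2 => (u + v) ^ i.1 * (u * v) ^ i.2.1 * u ^ (i.2.2 : ℕ)) ∘
        ![(0, 0, 1), (1, 0, 0)] = ![u, u + v] := by
      ext i
      fin_cases i <;> simp
    exact LinearIndependent.pair_add_right_iff.1 (hpair ▸ hfam.comp _ (by decide))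
  obtain ⟨L, c, hc, hL⟩ := exists_pbwLeadingCoeff hq ht huv
  refine linearIndependent_of_triangular pbwDeg L (fun k z hne => ?_) fun k => ?_
  · rcases lt_or_ge (ofLex (pbwDeg z)).1 (ofLex k).1 with hlt | hge
    · exact (Prod.Lex.lt_iff.2 (.inl hlt)).le
    · rw [hL k z hge] at hne
      exact (ite_ne_right_iff.1 hne).1.le
  · have hinj : Set.InjOn (fun z : ℕ × ℕ × Fin 2 × ℕ × ℕ => (z.1, z.2.1, z.2.2.1))
        {z | pbwDeg z = k} := by
      rintro ⟨a₁, a₂, ε, b₁, b₂⟩ rfl ⟨a₁', a₂', ε', b₁', b₂'⟩ h' h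
      replace h' := toLex_inj.1 h'
      simp only [Prod.mk.injEq] at h' h ⊢
      omega
    have hmul : LinearMap.ker (LinearMap.mulLeft ℂ (c (ofLex k).2)) = ⊥ :=
      LinearMap.ker_eq_bot.2 (mul_right_injective₀ (hc _))
    have hfibre : LinearIndepOn ℂ (fun z : ℕ × ℕ × Fin 2 × ℕ × ℕ => c (ofLex k).2 *
        ((u + v) ^ z.1 * (u * v) ^ z.2.1 * u ^ (z.2.2.1 : ℕ))) {z | pbwDeg z = k} :=
      (hfam.comp _ hinj.injective).map' _ hmul
    refine hfibre.congr fun z (hz : pbwDeg z = k) => ?_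
    rw [hL k z (by rw [hz]), if_pos hz]

theorem linearIndependent_pbwAplus (hq : q ≠ 0) (ht : t ≠ 0) :
    LinearIndependent ℂ (pbwAplus q t) := by
  open Polynomial in
  let ψ : ℂ[X][X] →ₐ[ℂ] FractionRing ℂ[X][X] := IsScalarTower.toAlgHom ℂ ℂ[X][X] _
  have hψ : LinearMap.ker ψ.toLinearMap = ⊥ :=
    LinearMap.ker_eq_bot.2 (IsFractionRing.injective ℂ[X][X] _)
  have hfam := (linearIndependent_polynomialFamily ℂ).map' _ hψ
  refine linearIndependent_pbwAplus_of_linearIndependent (u := ψ X) (v := ψ (C X - X)) hq ht ?_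
  simpa only [Function.comp_def, AlgHom.toLinearMap_apply, map_mul, map_pow, map_add] using hfam

end LinearIndependence

section Relations

variable {q t}

theorem P2_mul_P1 : P2 q t * P1 q t = P1 q t * P2 q t := by
  simpa only [P1, P2, map_mul] using RingQuot.mkAlgHom_rel ℂ (ARel.P2P1 (q := q) (t := t))

theorem Q2_mul_Q1 : Q2 q t * Q1 q t = Q1 q t * Q2 q t := by
  simpa only [Q1, Q2, map_mul] using RingQuot.mkAlgHom_rel ℂ (ARel.Q2Q1 (q := q) (t := t))

theorem P2_mul_Q2 : P2 q t * Q2 q t = q⁻¹ ^ 4 • (Q2 q t * P2 q t) := by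
  simpa only [P2, Q2, map_mul, map_smul] using
    RingQuot.mkAlgHom_rel ℂ (ARel.P2Q2 (q := q) (t := t))

theorem P2_mul_Q1 : P2 q t * Q1 q t = q⁻¹ ^ 2 • (Q1 q t * P2 q t) := by
  simpa only [P2, Q1, map_mul, map_smul] using
    RingQuot.mkAlgHom_rel ℂ (ARel.P2Q1 (q := q) (t := t))

theorem P1_mul_Q2 : P1 q t * Q2 q t = q⁻¹ ^ 2 • (Q2 q t * P1 q t) := by
  simpa only [P1, Q2, map_mul, map_smul] using
    RingQuot.mkAlgHom_rel ℂ (ARel.P1Q2 (q := q) (t := t))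

theorem P1_mul_Q1 : P1 q t * Q1 q t = Q1 q t * P1 q t + (q⁻¹ ^ 2 - 1) • R q t := by
  simpa only [P1, Q1, R, map_mul, map_smul, map_add] using
    RingQuot.mkAlgHom_rel ℂ (ARel.P1Q1 (q := q) (t := t))

theorem P2_mul_R : P2 q t * R q t = q⁻¹ ^ 2 • (R q t * P2 q t) := by
  simpa only [P2, R, map_mul, map_smul] using
    RingQuot.mkAlgHom_rel ℂ (ARel.P2R (q := q) (t := t))

theorem R_mul_Q2 : R q t * Q2 q t = q⁻¹ ^ 2 • (Q2 q t * R q t) := by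
  simpa only [R, Q2, map_mul, map_smul] using
    RingQuot.mkAlgHom_rel ℂ (ARel.RQ2 (q := q) (t := t))

theorem P1_mul_R :
    P1 q t * R q t = q⁻¹ ^ 2 • (R q t * P1 q t) + (1 - q⁻¹ ^ 2) • (Q1 q t * P2 q t) := by
  simpa only [P1, P2, Q1, R, map_mul, map_smul, map_add] using
    RingQuot.mkAlgHom_rel ℂ (ARel.P1R (q := q) (t := t))

theorem R_mul_Q1 :
    R q t * Q1 q t = q⁻¹ ^ 2 • (Q1 q t * R q t) + (1 - q⁻¹ ^ 2) • (Q2 q t * P1 q t) := by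
  simpa only [P1, Q1, Q2, R, map_mul, map_smul, map_add] using
    RingQuot.mkAlgHom_rel ℂ (ARel.RQ1 (q := q) (t := t))

theorem R_mul_R :
    R q t * R q t = ((1 + t ^ 2) * (q⁻¹ ^ 2 + t⁻¹ ^ 2)) • (Q2 q t * P2 q t)
      - q⁻¹ ^ 2 • (Q2 q t * P1 q t * P1 q t) - q⁻¹ ^ 2 • (Q1 q t * Q1 q t * P2 q t)
      + q⁻¹ ^ 2 • (Q1 q t * R q t * P1 q t) := by
  simpa only [P1, P2, Q1, Q2, R, map_mul, map_smul, map_add, map_sub] using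
    RingQuot.mkAlgHom_rel ℂ (ARel.RR (q := q) (t := t))

end Relations

section Straightening

/-- The exponents of the PBW monomials of degree `(M, N)`. -/
def pbwIndex (M N : ℕ) : Set (ℕ × ℕ × Fin 2 × ℕ × ℕ) :=
  {z | z.1 + 2 * z.2.1 + (z.2.2.1 : ℕ) = M ∧ z.2.2.2.1 + 2 * z.2.2.2.2 + (z.2.2.1 : ℕ) = N}

/-- The span of the PBW monomials of degree `(M, N)`; see `aPiece_eq_pbwPiece`. -/
def pbwPiece (q t : ℂ) (M N : ℕ) : Submodule ℂ (AlgA q t) :=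
  Submodule.span ℂ (pbwAplus q t '' pbwIndex M N)

variable {q t} {M N : ℕ} {z : AlgA q t}

theorem P1_pow_mul_P2_pow_mem (b₁ b₂ : ℕ) :
    P1 q t ^ b₁ * P2 q t ^ b₂ ∈ pbwPiece q t 0 (b₁ + 2 * b₂) :=
  Submodule.subset_span ⟨(0, 0, 0, b₁, b₂), ⟨rfl, rfl⟩, by simp [pbwAplus]⟩

theorem R_mul_P1_pow_mul_P2_pow_mem (b₁ b₂ : ℕ) :
    R q t * (P1 q t ^ b₁ * P2 q t ^ b₂) ∈ pbwPiece q t 1 (b₁ + 2 * b₂ + 1) :=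
  Submodule.subset_span ⟨(0, 0, 1, b₁, b₂), ⟨rfl, rfl⟩, by simp [pbwAplus, mul_assoc]⟩

theorem Q1_mul_mem (hz : z ∈ pbwPiece q t M N) : Q1 q t * z ∈ pbwPiece q t (M + 1) N := by
  refine Submodule.span_le (p := (pbwPiece q t (M + 1) N).comap (LinearMap.mulLeft ℂ (Q1 q t)))
    |>.2 ?_ hz
  rintro _ ⟨⟨a₁, a₂, ε, b₁, b₂⟩, ⟨hM, hN⟩, rfl⟩
  refine Submodule.subset_span ⟨(a₁ + 1, a₂, ε, b₁, b₂), ⟨?_, hN⟩, ?_⟩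
  · simp only at hM ⊢
    omega
  · simp only [pbwAplus, pow_succ', mul_assoc, LinearMap.mulLeft_apply]

theorem Q2_mul_mem (hz : z ∈ pbwPiece q t M N) : Q2 q t * z ∈ pbwPiece q t (M + 2) N := by
  refine Submodule.span_le (p := (pbwPiece q t (M + 2) N).comap (LinearMap.mulLeft ℂ (Q2 q t)))
    |>.2 ?_ hz
  rintro _ ⟨⟨a₁, a₂, ε, b₁, b₂⟩, ⟨hM, hN⟩, rfl⟩
  refine Submodule.subset_span ⟨(a₁, a₂ + 1, ε, b₁, b₂), ⟨?_, hN⟩, ?_⟩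
  · simp only at hM ⊢
    omega
  · have hcomm : Q2 q t * Q1 q t ^ a₁ = Q1 q t ^ a₁ * Q2 q t := Commute.pow_right Q2_mul_Q1 a₁
    simp only [pbwAplus, pow_succ', LinearMap.mulLeft_apply, ← mul_assoc, hcomm]

theorem pbwPiece_le {S : ℕ → ℕ → Submodule ℂ (AlgA q t)}
    (hP : ∀ b₁ b₂, P1 q t ^ b₁ * P2 q t ^ b₂ ∈ S 0 (b₁ + 2 * b₂))
    (hR : ∀ b₁ b₂, R q t * (P1 q t ^ b₁ * P2 q t ^ b₂) ∈ S 1 (b₁ + 2 * b₂ + 1))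
    (hQ1 : ∀ M N z, z ∈ S M N → Q1 q t * z ∈ S (M + 1) N)
    (hQ2 : ∀ M N z, z ∈ S M N → Q2 q t * z ∈ S (M + 2) N) (M N : ℕ) :
    pbwPiece q t M N ≤ S M N := by
  refine Submodule.span_le.2 ?_
  rintro _ ⟨⟨a₁, a₂, ε, b₁, b₂⟩, ⟨rfl, rfl⟩, rfl⟩
  simp only [pbwAplus, mul_assoc, SetLike.mem_coe]
  induction a₁ with
  | zero =>
    rw [pow_zero, one_mul, zero_add]
    induction a₂ with
    | zero =>
      rw [pow_zero, one_mul, mul_zero, zero_add]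
      match ε with
      | 0 => simpa using hP b₁ b₂
      | 1 => simpa using hR b₁ b₂
    | succ a₂ ih =>
      rw [pow_succ', mul_assoc, mul_add_one, add_right_comm]
      exact hQ2 _ _ _ ih
  | succ a₁ ih =>
    rw [pow_succ', mul_assoc, add_right_comm a₁ 1, add_right_comm _ 1]
    exact hQ1 _ _ _ ih

theorem P1_mul_P1_pow_mul_P2_pow (b₁ b₂ : ℕ) :
    P1 q t * (P1 q t ^ b₁ * P2 q t ^ b₂) = P1 q t ^ (b₁ + 1) * P2 q t ^ b₂ := by
  rw [pow_succ', mul_assoc]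

theorem P2_mul_P1_pow_mul_P2_pow (b₁ b₂ : ℕ) :
    P2 q t * (P1 q t ^ b₁ * P2 q t ^ b₂) = P1 q t ^ b₁ * P2 q t ^ (b₂ + 1) := by
  have hcomm : P2 q t * P1 q t ^ b₁ = P1 q t ^ b₁ * P2 q t := Commute.pow_right P2_mul_P1 b₁
  rw [pow_succ', ← mul_assoc, hcomm, mul_assoc]

theorem P2_mul_mem (hz : z ∈ pbwPiece q t M N) : P2 q t * z ∈ pbwPiece q t M (N + 2) := by
  refine pbwPiece_le (S := fun M N => (pbwPiece q t M (N + 2)).comap (LinearMap.mulLeft ℂ (P2 q t)))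
    (fun b₁ b₂ => ?_) (fun b₁ b₂ => ?_) (fun M N z hz => ?_) (fun M N z hz => ?_) M N hz <;>
    simp only [Submodule.mem_comap, LinearMap.mulLeft_apply] at *
  · rw [P2_mul_P1_pow_mul_P2_pow]
    exact P1_pow_mul_P2_pow_mem b₁ (b₂ + 1)
  · rw [← mul_assoc, P2_mul_R, smul_mul_assoc, mul_assoc, P2_mul_P1_pow_mul_P2_pow]
    exact Submodule.smul_mem _ _ (add_right_comm _ 1 2 ▸ R_mul_P1_pow_mul_P2_pow_mem b₁ (b₂ + 1))
  · rw [← mul_assoc, P2_mul_Q1, smul_mul_assoc, mul_assoc]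
    exact Submodule.smul_mem _ _ (Q1_mul_mem hz)
  · rw [← mul_assoc, P2_mul_Q2, smul_mul_assoc, mul_assoc]
    exact Submodule.smul_mem _ _ (Q2_mul_mem hz)

theorem P1_mul_R_mul_P1_pow_mul_P2_pow_mem (b₁ b₂ : ℕ) :
    P1 q t * (R q t * (P1 q t ^ b₁ * P2 q t ^ b₂)) ∈ pbwPiece q t 1 (b₁ + 2 * b₂ + 2) := by
  have hRP := R_mul_P1_pow_mul_P2_pow_mem (q := q) (t := t) (b₁ + 1) b₂
  have hQP := Q1_mul_mem (P1_pow_mul_P2_pow_mem (q := q) (t := t) b₁ (b₂ + 1))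
  rw [add_right_comm b₁ 1, add_assoc _ 1 1] at hRP
  rw [← mul_assoc, P1_mul_R, add_mul, smul_mul_assoc, smul_mul_assoc, mul_assoc, mul_assoc,
    P1_mul_P1_pow_mul_P2_pow, P2_mul_P1_pow_mul_P2_pow]
  exact add_mem (Submodule.smul_mem _ _ hRP) (Submodule.smul_mem _ _ hQP)

theorem R_mul_R_mul_P1_pow_mul_P2_pow_mem (b₁ b₂ : ℕ) :
    R q t * (R q t * (P1 q t ^ b₁ * P2 q t ^ b₂)) ∈ pbwPiece q t 2 (b₁ + 2 * b₂ + 2) := by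
  have hP1 : P1 q t ^ (b₁ + 1 + 1) * P2 q t ^ b₂ ∈ pbwPiece q t 0 (b₁ + 2 * b₂ + 2) := by
    rw [add_right_comm]
    exact P1_pow_mul_P2_pow_mem (b₁ + 1 + 1) b₂
  have hP2 : P1 q t ^ b₁ * P2 q t ^ (b₂ + 1) ∈ pbwPiece q t 0 (b₁ + 2 * b₂ + 2) :=
    P1_pow_mul_P2_pow_mem b₁ (b₂ + 1)
  have hRP : R q t * (P1 q t ^ (b₁ + 1) * P2 q t ^ b₂) ∈ pbwPiece q t 1 (b₁ + 2 * b₂ + 2) := by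
    have hRP := R_mul_P1_pow_mul_P2_pow_mem (q := q) (t := t) (b₁ + 1) b₂
    rwa [add_right_comm b₁ 1, add_assoc _ 1 1] at hRP
  rw [← mul_assoc, R_mul_R]
  simp only [add_mul, sub_mul, smul_mul_assoc, mul_assoc, P1_mul_P1_pow_mul_P2_pow,
    P2_mul_P1_pow_mul_P2_pow]
  exact add_mem (sub_mem (sub_mem (Submodule.smul_mem _ _ (Q2_mul_mem hP2))
    (Submodule.smul_mem _ _ (Q2_mul_mem hP1)))
    (Submodule.smul_mem _ _ (Q1_mul_mem (Q1_mul_mem hP2))))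
    (Submodule.smul_mem _ _ (Q1_mul_mem hRP))

-- `P₁Q₁` produces `R` and `RQ₁` produces `P₁`, so both are straightened by one induction.
theorem P1_mul_mem_and_R_mul_mem (hz : z ∈ pbwPiece q t M N) :
    P1 q t * z ∈ pbwPiece q t M (N + 1) ∧ R q t * z ∈ pbwPiece q t (M + 1) (N + 1) := by
  refine pbwPiece_le
    (S := fun M N => (pbwPiece q t M (N + 1)).comap (LinearMap.mulLeft ℂ (P1 q t)) ⊓
      (pbwPiece q t (M + 1) (N + 1)).comap (LinearMap.mulLeft ℂ (R q t)))
    (fun b₁ b₂ => ⟨?_, R_mul_P1_pow_mul_P2_pow_mem b₁ b₂⟩)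
    (fun b₁ b₂ => ⟨P1_mul_R_mul_P1_pow_mul_P2_pow_mem b₁ b₂,
      R_mul_R_mul_P1_pow_mul_P2_pow_mem b₁ b₂⟩)
    (fun M N z ⟨hP, hR⟩ => ⟨?_, ?_⟩) (fun M N z ⟨hP, hR⟩ => ⟨?_, ?_⟩) M N hz <;>
    simp only [Submodule.mem_comap, SetLike.mem_coe, LinearMap.mulLeft_apply] at *
  · rw [P1_mul_P1_pow_mul_P2_pow, add_right_comm]
    exact P1_pow_mul_P2_pow_mem (b₁ + 1) b₂
  · rw [← mul_assoc, P1_mul_Q1, add_mul, smul_mul_assoc, mul_assoc]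
    exact add_mem (Q1_mul_mem hP) (Submodule.smul_mem _ _ hR)
  · rw [← mul_assoc, R_mul_Q1, add_mul, smul_mul_assoc, smul_mul_assoc, mul_assoc, mul_assoc]
    exact add_mem (Submodule.smul_mem _ _ (Q1_mul_mem hR)) (Submodule.smul_mem _ _ (Q2_mul_mem hP))
  · rw [← mul_assoc, P1_mul_Q2, smul_mul_assoc, mul_assoc]
    exact Submodule.smul_mem _ _ (Q2_mul_mem hP)
  · rw [← mul_assoc, R_mul_Q2, smul_mul_assoc, mul_assoc]
    exact Submodule.smul_mem _ _ (Q2_mul_mem hR)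

theorem genA_mul_mem {g : AGen} (hg : plusGen g) (hz : z ∈ pbwPiece q t M N) :
    genA q t g * z ∈ pbwPiece q t (M + aDeg1 g) (N + aDeg2 g) := by
  cases g with
  | P1 => exact (P1_mul_mem_and_R_mul_mem hz).1
  | P2 => exact P2_mul_mem hz
  | Q1 => exact Q1_mul_mem hz
  | Q2 => exact Q2_mul_mem hz
  | R => exact (P1_mul_mem_and_R_mul_mem hz).2
  | P2i | Q2i => exact hg.elim

theorem one_mem_pbwPiece : 1 ∈ pbwPiece q t 0 0 := by
  simpa using P1_pow_mul_P2_pow_mem (q := q) (t := t) 0 0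

theorem prod_map_genA_mem {w : List AGen} (hw : ∀ g ∈ w, plusGen g) :
    (w.map (genA q t)).prod ∈ pbwPiece q t (w.map aDeg1).sum (w.map aDeg2).sum := by
  induction w with
  | nil => exact one_mem_pbwPiece
  | cons g w ih =>
    rw [List.forall_mem_cons] at hw
    simp only [List.map_cons, List.prod_cons, List.sum_cons, add_comm (aDeg1 g),
      add_comm (aDeg2 g)]
    exact genA_mul_mem hw.1 (ih hw.2)

theorem aPiece_eq_pbwPiece (M N : ℕ) : aPiece q t M N = pbwPiece q t M N := by
  refine le_antisymm (Submodule.span_le.2 ?_) (Submodule.span_mono ?_)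
  · rintro _ ⟨w, hw, rfl, rfl, rfl⟩
    exact prod_map_genA_mem hw
  · rintro _ ⟨⟨a₁, a₂, ε, b₁, b₂⟩, ⟨rfl, rfl⟩, rfl⟩
    refine ⟨.replicate a₁ .Q1 ++ .replicate a₂ .Q2 ++ .replicate ε .R ++ .replicate b₁ .P1 ++
      .replicate b₂ .P2, ?_, ?_, ?_, ?_⟩
    · simp [or_imp, forall_and, plusGen]
    · simp [aDeg1, mul_comm, add_assoc]
    · simp [aDeg2, mul_comm, add_left_comm, add_comm]
    · simp only [List.map_append, List.map_replicate, List.prod_append, List.prod_replicate]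
      rfl

theorem span_range_pbwAplus :
    Submodule.span ℂ (Set.range (pbwAplus q t)) =
      Subalgebra.toSubmodule
        (Algebra.adjoin ℂ {P1 q t, P2 q t, Q1 q t, Q2 q t, R q t}) := by
  refine le_antisymm (Submodule.span_le.2 ?_) ?_
  · rintro _ ⟨z, rfl⟩
    change pbwAplus q t z ∈ Algebra.adjoin ℂ _
    refine mul_mem (mul_mem (mul_mem (mul_mem ?_ ?_) ?_) ?_) ?_ <;>
      exact pow_mem (Algebra.subset_adjoin (by simp)) _
  · rw [Algebra.adjoin_eq_span, Submodule.span_le]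
    intro z hz
    obtain ⟨M, N, hz⟩ : ∃ M N, z ∈ pbwPiece q t M N := by
      induction hz using Submonoid.closure_induction_left with
      | one => exact ⟨0, 0, one_mem_pbwPiece⟩
      | mul_left g hg w _ ih =>
        obtain ⟨M, N, hw⟩ := ih
        rcases hg with rfl | rfl | rfl | rfl | rfl
        · exact ⟨_, _, (P1_mul_mem_and_R_mul_mem hw).1⟩
        · exact ⟨_, _, P2_mul_mem hw⟩
        · exact ⟨_, _, Q1_mul_mem hw⟩
        · exact ⟨_, _, Q2_mul_mem hw⟩
        · exact ⟨_, _, (P1_mul_mem_and_R_mul_mem hw).2⟩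
    exact Submodule.span_mono (Set.image_subset_range _ _) hz

end Straightening

section Rank

variable {q t}

theorem finite_pbwIndex (M N : ℕ) : (pbwIndex M N).Finite := by
  refine (Set.finite_Iic ((M, M, 1, N, N) : ℕ × ℕ × Fin 2 × ℕ × ℕ)).subset ?_
  rintro ⟨a₁, a₂, ε, b₁, b₂⟩ ⟨hM, hN⟩
  simp only [Set.mem_Iic, Prod.mk_le_mk] at hM hN ⊢
  omega

/-- Reorders the exponents `(a₁, a₂, ε, b₁, b₂)` as `(a₁, a₂, b₁, b₂, ε)`. -/
def pbwIndexEquiv (M N : ℕ) :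
    pbwIndex M N ≃ {x : ℕ × ℕ × ℕ × ℕ × Fin 2 //
      x.1 + 2 * x.2.1 + (x.2.2.2.2 : ℕ) = M ∧ x.2.2.1 + 2 * x.2.2.2.1 + (x.2.2.2.2 : ℕ) = N} where
  toFun z := ⟨(z.1.1, z.1.2.1, z.1.2.2.2.1, z.1.2.2.2.2, z.1.2.2.1), z.2⟩
  invFun x := ⟨(x.1.1, x.1.2.1, x.1.2.2.2.2, x.1.2.2.1, x.1.2.2.2.1), x.2⟩

theorem rank_aPiece (hli : LinearIndependent ℂ (pbwAplus q t)) (M N : ℕ) :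
    Module.rank ℂ (aPiece q t M N) =
      Nat.card {x : ℕ × ℕ × ℕ × ℕ × Fin 2 //
        x.1 + 2 * x.2.1 + (x.2.2.2.2 : ℕ) = M ∧
        x.2.2.1 + 2 * x.2.2.2.1 + (x.2.2.2.2 : ℕ) = N} := by
  have hfin : Finite (pbwIndex M N) := finite_pbwIndex M N
  rw [aPiece_eq_pbwPiece, pbwPiece, rank_span_set (hli.linearIndepOn _).id_image,
    Cardinal.mk_image_eq hli.injective, ← Nat.card_congr (pbwIndexEquiv M N), Nat.cast_card]

end Rank

end AlgA

/-- Let `𝒜⁺` be the subalgebra of `𝒜` generated by `P₁, P₂, Q₁, Q₂, R`.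
The monomials `Q₁^{a₁}Q₂^{a₂}R^{ε}P₁^{b₁}P₂^{b₂}` with `ε ∈ {0,1}`,
`a₁, a₂, b₁, b₂ ∈ ℕ₀` form a ℂ-basis of `𝒜⁺`; consequently, the dimension of the
degree-`(M,N)` graded piece of `𝒜⁺` equals the number of tuples
`(a₁, a₂, b₁, b₂, ε) ∈ ℕ₀⁴ × {0,1}` with `a₁ + 2a₂ + ε = M` and `b₁ + 2b₂ + ε = N`. -/
theorem stmt8 (q t : ℂ) (hq : q ≠ 0) (ht : t ≠ 0) :
    (LinearIndependent ℂ (pbwAplus q t) ∧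
      Submodule.span ℂ (Set.range (pbwAplus q t))
        = Subalgebra.toSubmodule
            (Algebra.adjoin ℂ {P1 q t, P2 q t, Q1 q t, Q2 q t, R q t})) ∧
    ∀ M N : ℕ,
      Module.rank ℂ (aPiece q t M N)
        = Nat.card {x : ℕ × ℕ × ℕ × ℕ × Fin 2 //
            x.1 + 2 * x.2.1 + (x.2.2.2.2 : ℕ) = M ∧
            x.2.2.1 + 2 * x.2.2.2.1 + (x.2.2.2.2 : ℕ) = N} := by
  have hli : LinearIndependent ℂ (pbwAplus q t) := AlgA.linearIndependent_pbwAplus hq ht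
  exact ⟨⟨hli, AlgA.span_range_pbwAplus⟩, AlgA.rank_aPiece hli⟩
end
end

section
/- In the subalgebra H⁺_{t,q} of H_{t,q} generated by T, T⁻¹, X₁, X₂, Y₁, Y₂, the multiplicative set {(Y₁Y₂)^a(X₁X₂)^b : a, b ∈ ℕ₀} satisfies the two-sided Ore condition; likewise, in the subalgebra 𝒜⁺ of 𝒜 generated by P₁, P₂, Q₁, Q₂, R, the multiplicative set {Q₂^aP₂^b : a, b ∈ ℕ₀} satisfies the two-sided Ore condition. -/
noncomputable section

/-- Generators of the double affine Hecke algebra of type GL₂: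
`T, T⁻¹, X₁, X₁⁻¹, X₂, X₂⁻¹, Y₁, Y₁⁻¹, Y₂, Y₂⁻¹`. -/
inductive DGen : Type
  | T | Ti | X1 | X1i | X2 | X2i | Y1 | Y1i | Y2 | Y2i

abbrev FD : Type := FreeAlgebra ℂ DGen

def gD : DGen → FD := FreeAlgebra.ι ℂ

/-- The defining relations of the double affine Hecke algebra `H_{t,q}` of type GL₂. -/
inductive DRel (q t : ℂ) : FD → FD → Prop
  | TTi : DRel q t (gD .T * gD .Ti) 1
  | TiT : DRel q t (gD .Ti * gD .T) 1
  | X1X1i : DRel q t (gD .X1 * gD .X1i) 1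
  | X1iX1 : DRel q t (gD .X1i * gD .X1) 1
  | X2X2i : DRel q t (gD .X2 * gD .X2i) 1
  | X2iX2 : DRel q t (gD .X2i * gD .X2) 1
  | Y1Y1i : DRel q t (gD .Y1 * gD .Y1i) 1
  | Y1iY1 : DRel q t (gD .Y1i * gD .Y1) 1
  | Y2Y2i : DRel q t (gD .Y2 * gD .Y2i) 1
  | Y2iY2 : DRel q t (gD .Y2i * gD .Y2) 1
  | TX1T : DRel q t (gD .T * gD .X1 * gD .T) (gD .X2)
  | TiY1Ti : DRel q t (gD .Ti * gD .Y1 * gD .Ti) (gD .Y2)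
  | Xcomm : DRel q t (gD .X1 * gD .X2) (gD .X2 * gD .X1)
  | Ycomm : DRel q t (gD .Y1 * gD .Y2) (gD .Y2 * gD .Y1)
  | YXX : DRel q t (gD .Y1 * (gD .X1 * gD .X2)) ((q ^ 2) • (gD .X1 * gD .X2 * gD .Y1))
  | X1iY2 : DRel q t (gD .X1i * gD .Y2) (gD .Y2 * gD .X1i * gD .Ti * gD .Ti)
  | hecke : DRel q t ((gD .T + algebraMap ℂ FD t⁻¹) * (gD .T - algebraMap ℂ FD t)) 0

/-- The double affine Hecke algebra `H_{t,q}` of type GL₂. -/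
abbrev DAHA (q t : ℂ) : Type := RingQuot (DRel q t)

variable (q t : ℂ)

def T : DAHA q t := RingQuot.mkAlgHom ℂ (DRel q t) (gD .T)
def Ti : DAHA q t := RingQuot.mkAlgHom ℂ (DRel q t) (gD .Ti)
def X1 : DAHA q t := RingQuot.mkAlgHom ℂ (DRel q t) (gD .X1)
def X1i : DAHA q t := RingQuot.mkAlgHom ℂ (DRel q t) (gD .X1i)
def X2 : DAHA q t := RingQuot.mkAlgHom ℂ (DRel q t) (gD .X2)
def X2i : DAHA q t := RingQuot.mkAlgHom ℂ (DRel q t) (gD .X2i)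
def Y1 : DAHA q t := RingQuot.mkAlgHom ℂ (DRel q t) (gD .Y1)
def Y1i : DAHA q t := RingQuot.mkAlgHom ℂ (DRel q t) (gD .Y1i)
def Y2 : DAHA q t := RingQuot.mkAlgHom ℂ (DRel q t) (gD .Y2)
def Y2i : DAHA q t := RingQuot.mkAlgHom ℂ (DRel q t) (gD .Y2i)

variable (q t : ℂ)

/-- The subalgebra `H⁺_{t,q}` of `H_{t,q}`, generated by `T, T⁻¹, X₁, X₂, Y₁, Y₂`. -/
def Hplus (q t : ℂ) : Subalgebra ℂ (DAHA q t) :=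
  Algebra.adjoin ℂ {T q t, Ti q t, X1 q t, X2 q t, Y1 q t, Y2 q t}

/-- The subalgebra `𝒜⁺` of `𝒜`, generated by `P₁, P₂, Q₁, Q₂, R`. -/
def Aplus (q t : ℂ) : Subalgebra ℂ (AlgA q t) :=
  Algebra.adjoin ℂ {P1 q t, P2 q t, Q1 q t, Q2 q t, R q t}

/-!
The generators of both denominator sets normalize the algebra: `Y₁Y₂` and `X₁X₂` commute with every
generator of `H⁺` up to a nonzero scalar, and so do `Q₂` and `P₂` with every generator of `𝒜⁺`.
Hence `sB = Bs` for every denominator `s`, and the Ore condition holds with the same denominator on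
both sides.

For `𝒜` the scalars are read off the relations. For `H` the only scalar that needs an argument is
the one between `Y₁Y₂` and `X₁`. The relation between `X₁⁻¹` and `Y₂` says `X₁Y₂ = Y₂T²X₁`, whence
`Y₁X₂ = T(Y₂T²X₁)T = TX₁Y₂T`. Multiplying by `X₁` on the right, comparing with
`Y₁X₁X₂ = q²X₁X₂Y₁` and cancelling `TX₁` gives `Y₂TX₁ = q²TX₁Y₁`, so that
`Y₂Y₁X₁ = Y₂T(Y₂TX₁) = q²Y₂T²X₁Y₁ = q²X₁Y₂Y₁`.
-/

section Normalizing

variable {M : Type*} [Monoid M]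

/-- The submonoid of those `s` that normalize `B`, in the sense that `s * B = B * s`. For invertible
`s` this is the usual normalizer; here `s` need not be invertible, so both inclusions are asked. -/
def normalizingSubmonoid (B : Set M) : Submonoid M where
  carrier := {s | ∀ x ∈ B, (∃ y ∈ B, SemiconjBy s x y) ∧ ∃ y ∈ B, SemiconjBy s y x}
  one_mem' x hx := ⟨⟨x, hx, .one_left x⟩, ⟨x, hx, .one_left x⟩⟩
  mul_mem' {s u} hs hu x hx := by
    constructor
    · obtain ⟨y, hy, huy⟩ := (hu x hx).1
      obtain ⟨z, hz, hsz⟩ := (hs y hy).1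
      exact ⟨z, hz, hsz.mul_left huy⟩
    · obtain ⟨y, hy, hsy⟩ := (hs x hx).2
      obtain ⟨z, hz, huz⟩ := (hu y hy).2
      exact ⟨z, hz, hsy.mul_left huz⟩

theorem ore_pow_mul_pow_of_mem_normalizingSubmonoid {B : Set M} {u v x : M}
    (hu : u ∈ normalizingSubmonoid B) (hv : v ∈ normalizingSubmonoid B) (hx : x ∈ B) (a b : ℕ) :
    (∃ y ∈ B, ∃ a' b' : ℕ, (u ^ a' * v ^ b') * x = y * (u ^ a * v ^ b)) ∧
      ∃ y ∈ B, ∃ a' b' : ℕ, x * (u ^ a' * v ^ b') = (u ^ a * v ^ b) * y := by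
  obtain ⟨⟨y, hy, hxy⟩, z, hz, hzx⟩ := mul_mem (pow_mem hu a) (pow_mem hv b) x hx
  exact ⟨⟨y, hy, a, b, hxy.eq⟩, z, hz, a, b, hzx.eq.symm⟩

theorem mem_normalizingSubmonoid_adjoin {k A : Type*} [CommSemiring k] [Semiring A] [Algebra k A]
    {S : Set A} {s : A}
    (hS : ∀ x ∈ S, (∃ y ∈ Algebra.adjoin k S, SemiconjBy s x y) ∧
      ∃ y ∈ Algebra.adjoin k S, SemiconjBy s y x) :
    s ∈ normalizingSubmonoid (Algebra.adjoin k S : Set A) := by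
  intro x hx
  simp only [SetLike.mem_coe] at hx ⊢
  induction hx using Algebra.adjoin_induction with
  | mem x hx => exact hS x hx
  | algebraMap r =>
    have hr : Commute s (algebraMap k A r) := Algebra.commute_algebraMap_right r s
    exact ⟨⟨_, algebraMap_mem _ r, hr⟩, ⟨_, algebraMap_mem _ r, hr⟩⟩
  | add x x' _ _ ihx ihx' =>
    obtain ⟨⟨y, hy, hxy⟩, ⟨z, hz, hzx⟩⟩ := ihx
    obtain ⟨⟨y', hy', hxy'⟩, ⟨z', hz', hzx'⟩⟩ := ihx'
    exact ⟨⟨_, add_mem hy hy', hxy.add_right hxy'⟩, ⟨_, add_mem hz hz', hzx.add_right hzx'⟩⟩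
  | mul x x' _ _ ihx ihx' =>
    obtain ⟨⟨y, hy, hxy⟩, ⟨z, hz, hzx⟩⟩ := ihx
    obtain ⟨⟨y', hy', hxy'⟩, ⟨z', hz', hzx'⟩⟩ := ihx'
    exact ⟨⟨_, mul_mem hy hy', hxy.mul_right hxy'⟩, ⟨_, mul_mem hz hz', hzx.mul_right hzx'⟩⟩

end Normalizing

section QuasiCommute

variable {k A : Type*} [CommSemiring k] [Semiring A] [Algebra k A] {s x y : A}

variable (k) in
/-- The elements `s` and `x` commute up to an invertible scalar. The scalar is not recorded,
because whether `s` normalizes a subalgebra does not depend on it. -/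
def QuasiCommute (s x : A) : Prop := ∃ c : kˣ, s * x = c • (x * s)

namespace QuasiCommute

theorem of_mul_eq_smul {c : k} (hc : IsUnit c) (h : s * x = c • (x * s)) : QuasiCommute k s x :=
  ⟨hc.unit, h⟩

theorem of_commute (h : Commute s x) : QuasiCommute k s x :=
  ⟨1, by rw [one_smul, h.eq]⟩

theorem symm : QuasiCommute k s x → QuasiCommute k x s := by
  rintro ⟨c, hc⟩
  exact ⟨c⁻¹, by rw [hc, inv_smul_smul]⟩

theorem mul_right : QuasiCommute k s x → QuasiCommute k s y → QuasiCommute k s (x * y) := by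
  rintro ⟨c, hc⟩ ⟨d, hd⟩
  refine ⟨c * d, ?_⟩
  calc s * (x * y) = c • (x * (s * y)) := by rw [← mul_assoc, hc, smul_mul_assoc, mul_assoc]
    _ = (c * d) • (x * y * s) := by rw [hd, mul_smul_comm, mul_smul, mul_assoc]

theorem mem_normalizingSubmonoid_adjoin {S : Set A} (hS : ∀ x ∈ S, QuasiCommute k s x) :
    s ∈ normalizingSubmonoid (Algebra.adjoin k S : Set A) := by
  refine _root_.mem_normalizingSubmonoid_adjoin fun x hx ↦ ?_
  obtain ⟨c, hc⟩ := hS x hx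
  have smul_mem (d : kˣ) : d • x ∈ Algebra.adjoin k S :=
    Subalgebra.smul_mem _ (Algebra.subset_adjoin hx) (d : k)
  exact ⟨⟨c • x, smul_mem c, by rw [SemiconjBy, hc, smul_mul_assoc]⟩,
    ⟨c⁻¹ • x, smul_mem c⁻¹, by rw [SemiconjBy, mul_smul_comm, hc, inv_smul_smul]⟩⟩

end QuasiCommute

end QuasiCommute

theorem commute_mul_of_mul_mul_eq {G : Type*} [Semigroup G] {τ x x' : G}
    (hx' : τ * x * τ = x') (hx : Commute x x') : Commute (x * x') τ :=
  calc x * x' * τ = τ * x * τ * x * τ := by rw [hx.eq, hx']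
    _ = τ * (x * x') := by rw [← hx']; simp only [mul_assoc]

theorem quasiCommute_mul_of_mul_mul_eq {k A : Type*} [CommSemiring k] [Semiring A] [Algebra k A]
    {τ x x' y y' : A} (hτx : IsLeftRegular (τ * x)) (hx' : τ * x * τ = x') (hy' : τ * y * τ = y')
    (hxy : SemiconjBy x y (y * τ * τ)) (hx : Commute x x') (h : QuasiCommute k y' (x * x')) :
    QuasiCommute k (y * y') x := by
  obtain ⟨c, hc⟩ := h
  have hcross : y' * x' = τ * x * y * τ :=
    calc y' * x' = τ * (y * τ * τ * x) * τ := by rw [← hx', ← hy']; simp only [mul_assoc]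
      _ = τ * x * y * τ := by rw [← hxy.eq]; simp only [mul_assoc]
  have hcancel : y * τ * x = c • (τ * x * y') := by
    refine hτx ?_
    calc τ * x * (y * τ * x) = τ * x * y * τ * x := by simp only [mul_assoc]
      _ = y' * (x * x') := by rw [← hcross, hx.eq, mul_assoc]
      _ = c • (τ * x * τ * x * y') := by rw [hc, hx.eq, hx']
      _ = τ * x * (c • (τ * x * y')) := by rw [mul_smul_comm]; simp only [mul_assoc]
  refine ⟨c, ?_⟩
  calc y * y' * x = y * τ * (y * τ * x) := by rw [← hy']; simp only [mul_assoc]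
    _ = c • (y * τ * τ * x * y') := by rw [hcancel, mul_smul_comm]; simp only [mul_assoc]
    _ = c • (x * (y * y')) := by rw [← hxy.eq, mul_assoc]

namespace DAHA

variable {q t : ℂ}

theorem T_mul_Ti : T q t * Ti q t = 1 := by
  simpa only [T, Ti, map_mul, map_one] using RingQuot.mkAlgHom_rel ℂ DRel.TTi

theorem Ti_mul_T : Ti q t * T q t = 1 := by
  simpa only [T, Ti, map_mul, map_one] using RingQuot.mkAlgHom_rel ℂ DRel.TiT

theorem X1_mul_X1i : X1 q t * X1i q t = 1 := by
  simpa only [X1, X1i, map_mul, map_one] using RingQuot.mkAlgHom_rel ℂ DRel.X1X1i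

theorem X1i_mul_X1 : X1i q t * X1 q t = 1 := by
  simpa only [X1, X1i, map_mul, map_one] using RingQuot.mkAlgHom_rel ℂ DRel.X1iX1

variable (q t) in
/-- `T` as a unit of `H_{t,q}`, with inverse the generator `T⁻¹`. -/
def unitT : (DAHA q t)ˣ := ⟨T q t, Ti q t, T_mul_Ti, Ti_mul_T⟩

variable (q t) in
/-- `X₁` as a unit of `H_{t,q}`, with inverse the generator `X₁⁻¹`. -/
def unitX1 : (DAHA q t)ˣ := ⟨X1 q t, X1i q t, X1_mul_X1i, X1i_mul_X1⟩

theorem T_mul_X1_mul_T : T q t * X1 q t * T q t = X2 q t := by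
  simpa only [T, X1, X2, map_mul] using RingQuot.mkAlgHom_rel ℂ DRel.TX1T

theorem Ti_mul_Y1_mul_Ti : Ti q t * Y1 q t * Ti q t = Y2 q t := by
  simpa only [Ti, Y1, Y2, map_mul] using RingQuot.mkAlgHom_rel ℂ DRel.TiY1Ti

theorem T_mul_Y2_mul_T : T q t * Y2 q t * T q t = Y1 q t := by
  rw [← Ti_mul_Y1_mul_Ti]
  calc T q t * (Ti q t * Y1 q t * Ti q t) * T q t
      = (T q t * Ti q t) * Y1 q t * (Ti q t * T q t) := by simp only [mul_assoc]
    _ = Y1 q t := by rw [T_mul_Ti, Ti_mul_T, one_mul, mul_one]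

theorem commute_X1_X2 : Commute (X1 q t) (X2 q t) := by
  simpa only [X1, X2, commute_iff_eq, map_mul] using RingQuot.mkAlgHom_rel ℂ DRel.Xcomm

theorem commute_Y1_Y2 : Commute (Y1 q t) (Y2 q t) := by
  simpa only [Y1, Y2, commute_iff_eq, map_mul] using RingQuot.mkAlgHom_rel ℂ DRel.Ycomm

theorem semiconjBy_X1_Y2 : SemiconjBy (X1 q t) (Y2 q t) (Y2 q t * T q t * T q t) := by
  have hrel : X1i q t * Y2 q t = Y2 q t * X1i q t * Ti q t * Ti q t := by
    simpa only [X1i, Y2, Ti, map_mul] using RingQuot.mkAlgHom_rel ℂ DRel.X1iY2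
  have hcancel (z : DAHA q t) : z * Ti q t * T q t = z := (unitT q t).inv_mul_cancel_right z
  have hinv : SemiconjBy (X1i q t) (Y2 q t * T q t * T q t) (Y2 q t) :=
    calc X1i q t * (Y2 q t * T q t * T q t)
        = X1i q t * Y2 q t * T q t * T q t := by simp only [mul_assoc]
      _ = Y2 q t * X1i q t := by rw [hrel, hcancel, hcancel]
  exact SemiconjBy.units_inv_symm_left (a := (unitX1 q t)⁻¹) hinv

theorem quasiCommute_Y1_X1_mul_X2 (hq : q ≠ 0) :
    QuasiCommute ℂ (Y1 q t) (X1 q t * X2 q t) :=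
  .of_mul_eq_smul (hq.isUnit.pow 2) <| by
    simpa only [X1, X2, Y1, map_mul, map_smul] using RingQuot.mkAlgHom_rel ℂ DRel.YXX

theorem commute_X1_mul_X2_T : Commute (X1 q t * X2 q t) (T q t) :=
  commute_mul_of_mul_mul_eq T_mul_X1_mul_T commute_X1_X2

theorem commute_Y1_mul_Y2_Ti : Commute (Y1 q t * Y2 q t) (Ti q t) :=
  commute_mul_of_mul_mul_eq Ti_mul_Y1_mul_Ti commute_Y1_Y2

theorem commute_X1_mul_X2_Ti : Commute (X1 q t * X2 q t) (Ti q t) :=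
  Commute.units_inv_right (u := unitT q t) commute_X1_mul_X2_T

theorem commute_Y1_mul_Y2_T : Commute (Y1 q t * Y2 q t) (T q t) :=
  Commute.units_inv_right (u := (unitT q t)⁻¹) commute_Y1_mul_Y2_Ti

theorem quasiCommute_Y1_mul_Y2_X1 (hq : q ≠ 0) :
    QuasiCommute ℂ (Y1 q t * Y2 q t) (X1 q t) := by
  have hreg : IsLeftRegular (T q t * X1 q t) := (unitT q t * unitX1 q t).isUnit.isRegular.left
  rw [commute_Y1_Y2.eq]
  exact quasiCommute_mul_of_mul_mul_eq hreg T_mul_X1_mul_T T_mul_Y2_mul_T semiconjBy_X1_Y2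
    commute_X1_X2 (quasiCommute_Y1_X1_mul_X2 hq)

theorem quasiCommute_Y1_mul_Y2_X2 (hq : q ≠ 0) :
    QuasiCommute ℂ (Y1 q t * Y2 q t) (X2 q t) := by
  have hT : QuasiCommute ℂ (Y1 q t * Y2 q t) (T q t) := .of_commute commute_Y1_mul_Y2_T
  rw [← T_mul_X1_mul_T]
  exact (hT.mul_right (quasiCommute_Y1_mul_Y2_X1 hq)).mul_right hT

theorem quasiCommute_X1_mul_X2_Y2 (hq : q ≠ 0) :
    QuasiCommute ℂ (X1 q t * X2 q t) (Y2 q t) := by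
  have hTi : QuasiCommute ℂ (X1 q t * X2 q t) (Ti q t) := .of_commute commute_X1_mul_X2_Ti
  rw [← Ti_mul_Y1_mul_Ti]
  exact (hTi.mul_right (quasiCommute_Y1_X1_mul_X2 hq).symm).mul_right hTi

theorem Y1_mul_Y2_mem_normalizingSubmonoid (hq : q ≠ 0) :
    Y1 q t * Y2 q t ∈ normalizingSubmonoid (Hplus q t : Set (DAHA q t)) := by
  refine QuasiCommute.mem_normalizingSubmonoid_adjoin ?_
  rintro x (rfl | rfl | rfl | rfl | rfl | rfl)
  · exact .of_commute commute_Y1_mul_Y2_T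
  · exact .of_commute commute_Y1_mul_Y2_Ti
  · exact quasiCommute_Y1_mul_Y2_X1 hq
  · exact quasiCommute_Y1_mul_Y2_X2 hq
  · exact .of_commute ((Commute.refl _).mul_left commute_Y1_Y2.symm)
  · exact .of_commute (commute_Y1_Y2.mul_left (Commute.refl _))

theorem X1_mul_X2_mem_normalizingSubmonoid (hq : q ≠ 0) :
    X1 q t * X2 q t ∈ normalizingSubmonoid (Hplus q t : Set (DAHA q t)) := by
  refine QuasiCommute.mem_normalizingSubmonoid_adjoin ?_
  rintro x (rfl | rfl | rfl | rfl | rfl | rfl)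
  · exact .of_commute commute_X1_mul_X2_T
  · exact .of_commute commute_X1_mul_X2_Ti
  · exact .of_commute ((Commute.refl _).mul_left commute_X1_X2.symm)
  · exact .of_commute (commute_X1_X2.mul_left (Commute.refl _))
  · exact (quasiCommute_Y1_X1_mul_X2 hq).symm
  · exact quasiCommute_X1_mul_X2_Y2 hq

end DAHA

namespace AlgA

variable {q t : ℂ}

theorem commute_P2_P1 : Commute (P2 q t) (P1 q t) := by
  simpa only [P1, P2, commute_iff_eq, map_mul] using RingQuot.mkAlgHom_rel ℂ ARel.P2P1

theorem commute_Q2_Q1 : Commute (Q2 q t) (Q1 q t) := by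
  simpa only [Q1, Q2, commute_iff_eq, map_mul] using RingQuot.mkAlgHom_rel ℂ ARel.Q2Q1

theorem quasiCommute_P2_Q2 (hq : q ≠ 0) : QuasiCommute ℂ (P2 q t) (Q2 q t) :=
  .of_mul_eq_smul (hq.isUnit.inv.pow 4) <| by
    simpa only [P2, Q2, map_mul, map_smul] using RingQuot.mkAlgHom_rel ℂ ARel.P2Q2

theorem quasiCommute_P2_Q1 (hq : q ≠ 0) : QuasiCommute ℂ (P2 q t) (Q1 q t) :=
  .of_mul_eq_smul (hq.isUnit.inv.pow 2) <| by
    simpa only [P2, Q1, map_mul, map_smul] using RingQuot.mkAlgHom_rel ℂ ARel.P2Q1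

theorem quasiCommute_P1_Q2 (hq : q ≠ 0) : QuasiCommute ℂ (P1 q t) (Q2 q t) :=
  .of_mul_eq_smul (hq.isUnit.inv.pow 2) <| by
    simpa only [P1, Q2, map_mul, map_smul] using RingQuot.mkAlgHom_rel ℂ ARel.P1Q2

theorem quasiCommute_P2_R (hq : q ≠ 0) : QuasiCommute ℂ (P2 q t) (R q t) :=
  .of_mul_eq_smul (hq.isUnit.inv.pow 2) <| by
    simpa only [P2, R, map_mul, map_smul] using RingQuot.mkAlgHom_rel ℂ ARel.P2R

theorem quasiCommute_R_Q2 (hq : q ≠ 0) : QuasiCommute ℂ (R q t) (Q2 q t) :=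
  .of_mul_eq_smul (hq.isUnit.inv.pow 2) <| by
    simpa only [R, Q2, map_mul, map_smul] using RingQuot.mkAlgHom_rel ℂ ARel.RQ2

theorem Q2_mem_normalizingSubmonoid (hq : q ≠ 0) :
    Q2 q t ∈ normalizingSubmonoid (Aplus q t : Set (AlgA q t)) := by
  refine QuasiCommute.mem_normalizingSubmonoid_adjoin ?_
  rintro x (rfl | rfl | rfl | rfl | rfl)
  · exact (quasiCommute_P1_Q2 hq).symm
  · exact (quasiCommute_P2_Q2 hq).symm
  · exact .of_commute commute_Q2_Q1
  · exact .of_commute (Commute.refl _)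
  · exact (quasiCommute_R_Q2 hq).symm

theorem P2_mem_normalizingSubmonoid (hq : q ≠ 0) :
    P2 q t ∈ normalizingSubmonoid (Aplus q t : Set (AlgA q t)) := by
  refine QuasiCommute.mem_normalizingSubmonoid_adjoin ?_
  rintro x (rfl | rfl | rfl | rfl | rfl)
  · exact .of_commute commute_P2_P1
  · exact .of_commute (Commute.refl _)
  · exact quasiCommute_P2_Q1 hq
  · exact quasiCommute_P2_Q2 hq
  · exact quasiCommute_P2_R hq

end AlgA

/-- In the subalgebra `H⁺_{t,q}` of `H_{t,q}` generated by
`T, T⁻¹, X₁, X₂, Y₁, Y₂`, the multiplicative set `{(Y₁Y₂)^a(X₁X₂)^b : a, b ∈ ℕ₀}`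
satisfies the two-sided Ore condition; likewise, in the subalgebra `𝒜⁺` of `𝒜`
generated by `P₁, P₂, Q₁, Q₂, R`, the multiplicative set `{Q₂^aP₂^b : a, b ∈ ℕ₀}`
satisfies the two-sided Ore condition. -/
theorem stmt10 (q t : ℂ) (hq : q ≠ 0) (ht : t ≠ 0) :
    (∀ h ∈ Hplus q t, ∀ a b : ℕ,
      (∃ h' ∈ Hplus q t, ∃ a' b' : ℕ,
        ((Y1 q t * Y2 q t) ^ a' * (X1 q t * X2 q t) ^ b') * h
          = h' * ((Y1 q t * Y2 q t) ^ a * (X1 q t * X2 q t) ^ b)) ∧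
      (∃ h'' ∈ Hplus q t, ∃ a'' b'' : ℕ,
        h * ((Y1 q t * Y2 q t) ^ a'' * (X1 q t * X2 q t) ^ b'')
          = ((Y1 q t * Y2 q t) ^ a * (X1 q t * X2 q t) ^ b) * h'')) ∧
    (∀ x ∈ Aplus q t, ∀ a b : ℕ,
      (∃ x' ∈ Aplus q t, ∃ a' b' : ℕ,
        (Q2 q t ^ a' * P2 q t ^ b') * x = x' * (Q2 q t ^ a * P2 q t ^ b)) ∧
      (∃ x'' ∈ Aplus q t, ∃ a'' b'' : ℕ,
        x * (Q2 q t ^ a'' * P2 q t ^ b'') = (Q2 q t ^ a * P2 q t ^ b) * x'')) :=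
  ⟨fun _ hh ↦ ore_pow_mul_pow_of_mem_normalizingSubmonoid
      (DAHA.Y1_mul_Y2_mem_normalizingSubmonoid hq) (DAHA.X1_mul_X2_mem_normalizingSubmonoid hq) hh,
    fun _ hx ↦ ore_pow_mul_pow_of_mem_normalizingSubmonoid
      (AlgA.Q2_mem_normalizingSubmonoid hq) (AlgA.P2_mem_normalizingSubmonoid hq) hx⟩
end
end

section
/- In 𝒟q⁺(GL₂), for all i, j ∈ {1,2}: det_q(A)·a^i_j = a^i_j·det_q(A); det_q(D)·a^i_j = q⁻²·a^i_j·det_q(D); ∂^i_j·det_q(A) = q⁻²·det_q(A)·∂^i_j; and ∂^i_j·det_q(D) = det_q(D)·∂^i_j. Consequently the multiplicative set {det_q(A)^m det_q(D)^n : m, n ∈ ℕ₀} satisfies the two-sided Ore condition in 𝒟q⁺(GL₂). -/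
noncomputable section

/-- Generators `a¹₁, a¹₂, a²₁, a²₂, ∂¹₁, ∂¹₂, ∂²₁, ∂²₂` of the algebra
`𝒟q⁺(GL₂)` of quantum differential operators. -/
inductive QGen : Type
  | a11 | a12 | a21 | a22 | p11 | p12 | p21 | p22

abbrev FQ : Type := FreeAlgebra ℂ QGen

def gQ : QGen → FQ := FreeAlgebra.ι ℂ

/-- The defining relations of `𝒟q⁺(GL₂)`. -/
inductive QRel (q : ℂ) : FQ → FQ → Prop
  -- the six `a`-relations
  | a1 : QRel q (gQ .a12 * gQ .a11)
      (gQ .a11 * gQ .a12 + (1 - q⁻¹ ^ 2) • (gQ .a12 * gQ .a22))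
  | a2 : QRel q (gQ .a22 * gQ .a11) (gQ .a11 * gQ .a22)
  | a3 : QRel q (gQ .a21 * gQ .a11)
      (gQ .a11 * gQ .a21 - (1 - q⁻¹ ^ 2) • (gQ .a22 * gQ .a21))
  | a4 : QRel q (gQ .a22 * gQ .a12) ((q ^ 2) • (gQ .a12 * gQ .a22))
  | a5 : QRel q (gQ .a21 * gQ .a12)
      (gQ .a12 * gQ .a21 + (1 - q⁻¹ ^ 2) • (gQ .a11 * gQ .a22 - gQ .a22 * gQ .a22))
  | a6 : QRel q (gQ .a22 * gQ .a21) ((q⁻¹ ^ 2) • (gQ .a21 * gQ .a22))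
  -- the six `∂`-relations
  | p1 : QRel q (gQ .p12 * gQ .p11)
      (gQ .p11 * gQ .p12 + (1 - q⁻¹ ^ 2) • (gQ .p12 * gQ .p22))
  | p2 : QRel q (gQ .p22 * gQ .p11) (gQ .p11 * gQ .p22)
  | p3 : QRel q (gQ .p21 * gQ .p11)
      (gQ .p11 * gQ .p21 - (1 - q⁻¹ ^ 2) • (gQ .p22 * gQ .p21))
  | p4 : QRel q (gQ .p22 * gQ .p12) ((q ^ 2) • (gQ .p12 * gQ .p22))
  | p5 : QRel q (gQ .p21 * gQ .p12)
      (gQ .p12 * gQ .p21 + (1 - q⁻¹ ^ 2) • (gQ .p11 * gQ .p22 - gQ .p22 * gQ .p22))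
  | p6 : QRel q (gQ .p22 * gQ .p21) ((q⁻¹ ^ 2) • (gQ .p21 * gQ .p22))
  -- the sixteen cross relations
  | c1 : QRel q (gQ .p11 * gQ .a11)
      (-((1 - q⁻¹ ^ 2) • (gQ .p12 * gQ .a21)) + (q⁻¹ ^ 2) • (gQ .a11 * gQ .p11)
        + (q⁻¹ ^ 2 - q⁻¹ ^ 4) • (gQ .a12 * gQ .p21))
  | c2 : QRel q (gQ .p11 * gQ .a12)
      ((q⁻¹ ^ 2 - 1) • (gQ .p12 * gQ .a22) + (q⁻¹ ^ 2) • (gQ .a12 * gQ .p11))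
  | c3 : QRel q (gQ .p11 * gQ .a21)
      ((1 - q ^ 2) • (gQ .p21 * gQ .a11) - ((q - q⁻¹) ^ 2) • (gQ .p22 * gQ .a21)
        + gQ .a21 * gQ .p11 + (1 - q⁻¹ ^ 2) • (gQ .a22 * gQ .p21))
  | c4 : QRel q (gQ .p11 * gQ .a22)
      ((1 - q ^ 2) • (gQ .p21 * gQ .a12) - ((q - q⁻¹) ^ 2) • (gQ .p22 * gQ .a22)
        + gQ .a22 * gQ .p11)
  | c5 : QRel q (gQ .p12 * gQ .a11)
      (gQ .a11 * gQ .p12 + (1 - q⁻¹ ^ 2) • (gQ .a12 * gQ .p22)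
        + (q⁻¹ ^ 2 - 1) • (gQ .a12 * gQ .p11))
  | c6 : QRel q (gQ .p12 * gQ .a12) ((q⁻¹ ^ 2) • (gQ .a12 * gQ .p12))
  | c7 : QRel q (gQ .p12 * gQ .a21)
      ((q⁻¹ ^ 2 - 1) • (gQ .p22 * gQ .a11) + gQ .a21 * gQ .p12
        + (q⁻¹ ^ 2 - 1) • (gQ .a22 * gQ .p11) + (1 - q⁻¹ ^ 2) • (gQ .a22 * gQ .p22))
  | c8 : QRel q (gQ .p12 * gQ .a22)
      ((q⁻¹ ^ 2 - 1) • (gQ .p22 * gQ .a12) + (q⁻¹ ^ 2) • (gQ .a22 * gQ .p12))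
  | c9 : QRel q (gQ .p21 * gQ .a11)
      ((q⁻¹ ^ 2) • (gQ .a11 * gQ .p21) - (1 - q⁻¹ ^ 2) • (gQ .p22 * gQ .a21))
  | c10 : QRel q (gQ .p21 * gQ .a12)
      ((q⁻¹ ^ 2 - 1) • (gQ .p22 * gQ .a22) + gQ .a12 * gQ .p21)
  | c11 : QRel q (gQ .p21 * gQ .a21) ((q⁻¹ ^ 2) • (gQ .a21 * gQ .p21))
  | c12 : QRel q (gQ .p21 * gQ .a22) (gQ .a22 * gQ .p21)
  | c13 : QRel q (gQ .p22 * gQ .a11)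
      (gQ .a11 * gQ .p22 + (1 - q ^ 2) • (gQ .a12 * gQ .p21))
  | c14 : QRel q (gQ .p22 * gQ .a12) (gQ .a12 * gQ .p22)
  | c15 : QRel q (gQ .p22 * gQ .a21)
      ((q⁻¹ ^ 2) • (gQ .a21 * gQ .p22) + (q⁻¹ ^ 2 - 1) • (gQ .a22 * gQ .p21))
  | c16 : QRel q (gQ .p22 * gQ .a22) ((q⁻¹ ^ 2) • (gQ .a22 * gQ .p22))

/-- The algebra `𝒟q⁺(GL₂)` of quantum differential operators on `GL₂`. -/
abbrev DqPlus (q : ℂ) : Type := RingQuot (QRel q)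

def a11 (q : ℂ) : DqPlus q := RingQuot.mkAlgHom ℂ (QRel q) (gQ .a11)
def a12 (q : ℂ) : DqPlus q := RingQuot.mkAlgHom ℂ (QRel q) (gQ .a12)
def a21 (q : ℂ) : DqPlus q := RingQuot.mkAlgHom ℂ (QRel q) (gQ .a21)
def a22 (q : ℂ) : DqPlus q := RingQuot.mkAlgHom ℂ (QRel q) (gQ .a22)
def p11 (q : ℂ) : DqPlus q := RingQuot.mkAlgHom ℂ (QRel q) (gQ .p11)
def p12 (q : ℂ) : DqPlus q := RingQuot.mkAlgHom ℂ (QRel q) (gQ .p12)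
def p21 (q : ℂ) : DqPlus q := RingQuot.mkAlgHom ℂ (QRel q) (gQ .p21)
def p22 (q : ℂ) : DqPlus q := RingQuot.mkAlgHom ℂ (QRel q) (gQ .p22)

/-- The quantum determinant `det_q(A) = a¹₁a²₂ − q²a¹₂a²₁`. -/
def detA (q : ℂ) : DqPlus q := a11 q * a22 q - (q ^ 2) • (a12 q * a21 q)

/-- The quantum determinant `det_q(D) = ∂¹₁∂²₂ − q²∂¹₂∂²₁`. -/
def detD (q : ℂ) : DqPlus q := p11 q * p22 q - (q ^ 2) • (p12 q * p21 q)

/-- The matrix entry generators `a^i_j`, indexed by `Fin 2 × Fin 2`. -/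
def aM (q : ℂ) : Fin 2 → Fin 2 → DqPlus q :=
  ![![a11 q, a12 q], ![a21 q, a22 q]]

/-- The matrix entry generators `∂^i_j`, indexed by `Fin 2 × Fin 2`. -/
def pM (q : ℂ) : Fin 2 → Fin 2 → DqPlus q :=
  ![![p11 q, p12 q], ![p21 q, p22 q]]

/-!
The matrix `A` has a quantum adjugate `Ã` with `A * Ã = Ã * A = det_q(A)`, whence
`det_q(A) * A = A * Ã * A = A * det_q(A)`, entry by entry; the same holds for `D`. Moving `a^i_j`
to the left through `∂¹₁∂²₂` and `∂¹₂∂²₁` gives its `q⁻²`-commutation with `det_q(D)`; besides the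
cross relations, only `∂²₂∂²₁ = q⁻²∂²₁∂²₂` is needed. The anti-automorphism `a^i_j ↦ ∂^j_i`,
`∂^i_j ↦ a^j_i` exchanges the two determinants, so it turns this into the relation between `∂^i_j`
and `det_q(A)`. Hence both determinants commute with every generator up to an invertible scalar, so
they and all the products `s = det_q(A)^m * det_q(D)^n` are normal: `s * x = x' * s` and
`x * s = s * x''` are solvable, which is the Ore condition with the same denominator `s`.
-/

section Normal

variable {R B : Type*} [CommSemiring R] [Semiring B] [Algebra R B]

variable (R) in
/-- The subalgebra of those `x` with `s * x ∈ B * s` and `x * s ∈ s * B`. It is used to check that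
`s` is normal on generators of `B` only. -/
def normalizedSubalgebra (s : B) : Subalgebra R B where
  carrier := {x | (∃ y, SemiconjBy s x y) ∧ ∃ y, SemiconjBy s y x}
  mul_mem' := by
    rintro _ _ ⟨⟨_, ha₁⟩, _, ha₂⟩ ⟨⟨_, hb₁⟩, _, hb₂⟩
    exact ⟨⟨_, ha₁.mul_right hb₁⟩, _, ha₂.mul_right hb₂⟩
  add_mem' := by
    rintro _ _ ⟨⟨_, ha₁⟩, _, ha₂⟩ ⟨⟨_, hb₁⟩, _, hb₂⟩
    exact ⟨⟨_, ha₁.add_right hb₁⟩, _, ha₂.add_right hb₂⟩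
  algebraMap_mem' r :=
    have h : Commute s (algebraMap R B r) := Algebra.commute_algebraMap_right r s
    ⟨⟨_, h⟩, _, h⟩

/-- The submonoid of normal elements of a monoid, i.e. of those `s` with `s * M = M * s`; a
multiplicative set of normal elements satisfies the two-sided Ore condition. -/
def normalElements (M : Type*) [Monoid M] : Submonoid M where
  carrier := {s | ∀ x, (∃ y, SemiconjBy s x y) ∧ ∃ y, SemiconjBy s y x}
  one_mem' x := ⟨⟨x, .one_left x⟩, x, .one_left x⟩
  mul_mem' := by
    intro s t hs ht x
    obtain ⟨⟨y, hy⟩, -⟩ := ht x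
    obtain ⟨⟨z, hz⟩, -⟩ := hs y
    obtain ⟨-, u, hu⟩ := hs x
    obtain ⟨-, v, hv⟩ := ht u
    exact ⟨⟨z, hz.mul_left hy⟩, v, hu.mul_left hv⟩

theorem mem_normalElements_of_adjoin_eq_top {s : B} {S : Set B} (hS : Algebra.adjoin R S = ⊤)
    (h : S ⊆ normalizedSubalgebra R s) : s ∈ normalElements B := fun x ↦
  Algebra.adjoin_le h (hS ▸ Algebra.mem_top : x ∈ Algebra.adjoin R S)

theorem mem_normalizedSubalgebra_of_left_mul_eq_smul {s x : B} {c : R} (hc : IsUnit c)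
    (h : s * x = c • (x * s)) : x ∈ normalizedSubalgebra R s := by
  obtain ⟨u, rfl⟩ := hc
  refine ⟨⟨(u : R) • x, by rw [SemiconjBy, h, smul_mul_assoc]⟩, (↑u⁻¹ : R) • x, ?_⟩
  rw [SemiconjBy, mul_smul_comm, h, smul_smul, Units.inv_mul, one_smul]

theorem mem_normalizedSubalgebra_of_right_mul_eq_smul {s x : B} {c : R} (hc : IsUnit c)
    (h : x * s = c • (s * x)) : x ∈ normalizedSubalgebra R s := by
  obtain ⟨u, rfl⟩ := hc
  refine mem_normalizedSubalgebra_of_left_mul_eq_smul u⁻¹.isUnit ?_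
  rw [h, smul_smul, Units.inv_mul, one_smul]

theorem mem_normalizedSubalgebra_of_commute {s x : B} (h : Commute s x) :
    x ∈ normalizedSubalgebra R s :=
  ⟨⟨x, h⟩, x, h⟩

end Normal

section Relations

open Matrix MulOpposite

variable {K B : Type*} [Field K] [Ring B] [Algebra K B]

/-- `M` satisfies the defining relations of the reflection equation algebra of `GL₂`, which are
imposed on both `A` and `D` in `𝒟q⁺(GL₂)`. Indices start at `0`: `M 0 1` stands for `m¹₂`. -/
structure ReflectionRelations (q : K) (M : Matrix (Fin 2) (Fin 2) B) : Prop where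
  m01_mul_m00 : M 0 1 * M 0 0 = M 0 0 * M 0 1 + (1 - q⁻¹ ^ 2) • (M 0 1 * M 1 1)
  m11_mul_m00 : M 1 1 * M 0 0 = M 0 0 * M 1 1
  m10_mul_m00 : M 1 0 * M 0 0 = M 0 0 * M 1 0 - (1 - q⁻¹ ^ 2) • (M 1 1 * M 1 0)
  m11_mul_m01 : M 1 1 * M 0 1 = q ^ 2 • (M 0 1 * M 1 1)
  m10_mul_m01 : M 1 0 * M 0 1 =
    M 0 1 * M 1 0 + (1 - q⁻¹ ^ 2) • (M 0 0 * M 1 1 - M 1 1 * M 1 1)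
  m11_mul_m10 : M 1 1 * M 1 0 = q⁻¹ ^ 2 • (M 1 0 * M 1 1)

/-- `A` and `D` satisfy the cross relations of `𝒟q⁺(GL₂)`, which move the entries of `A` to the left
past those of `D`. -/
structure CrossRelations (q : K) (A D : Matrix (Fin 2) (Fin 2) B) : Prop where
  d00_mul_a00 : D 0 0 * A 0 0 = -((1 - q⁻¹ ^ 2) • (D 0 1 * A 1 0))
    + q⁻¹ ^ 2 • (A 0 0 * D 0 0) + (q⁻¹ ^ 2 - q⁻¹ ^ 4) • (A 0 1 * D 1 0)
  d00_mul_a01 : D 0 0 * A 0 1 = (q⁻¹ ^ 2 - 1) • (D 0 1 * A 1 1) + q⁻¹ ^ 2 • (A 0 1 * D 0 0)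
  d00_mul_a10 : D 0 0 * A 1 0 = (1 - q ^ 2) • (D 1 0 * A 0 0)
    - (q - q⁻¹) ^ 2 • (D 1 1 * A 1 0) + A 1 0 * D 0 0 + (1 - q⁻¹ ^ 2) • (A 1 1 * D 1 0)
  d00_mul_a11 : D 0 0 * A 1 1 =
    (1 - q ^ 2) • (D 1 0 * A 0 1) - (q - q⁻¹) ^ 2 • (D 1 1 * A 1 1) + A 1 1 * D 0 0
  d01_mul_a00 : D 0 1 * A 0 0 = A 0 0 * D 0 1 + (1 - q⁻¹ ^ 2) • (A 0 1 * D 1 1)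
    + (q⁻¹ ^ 2 - 1) • (A 0 1 * D 0 0)
  d01_mul_a01 : D 0 1 * A 0 1 = q⁻¹ ^ 2 • (A 0 1 * D 0 1)
  d01_mul_a10 : D 0 1 * A 1 0 = (q⁻¹ ^ 2 - 1) • (D 1 1 * A 0 0) + A 1 0 * D 0 1
    + (q⁻¹ ^ 2 - 1) • (A 1 1 * D 0 0) + (1 - q⁻¹ ^ 2) • (A 1 1 * D 1 1)
  d01_mul_a11 : D 0 1 * A 1 1 = (q⁻¹ ^ 2 - 1) • (D 1 1 * A 0 1) + q⁻¹ ^ 2 • (A 1 1 * D 0 1)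
  d10_mul_a00 : D 1 0 * A 0 0 = q⁻¹ ^ 2 • (A 0 0 * D 1 0) - (1 - q⁻¹ ^ 2) • (D 1 1 * A 1 0)
  d10_mul_a01 : D 1 0 * A 0 1 = (q⁻¹ ^ 2 - 1) • (D 1 1 * A 1 1) + A 0 1 * D 1 0
  d10_mul_a10 : D 1 0 * A 1 0 = q⁻¹ ^ 2 • (A 1 0 * D 1 0)
  d10_mul_a11 : D 1 0 * A 1 1 = A 1 1 * D 1 0
  d11_mul_a00 : D 1 1 * A 0 0 = A 0 0 * D 1 1 + (1 - q ^ 2) • (A 0 1 * D 1 0)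
  d11_mul_a01 : D 1 1 * A 0 1 = A 0 1 * D 1 1
  d11_mul_a10 : D 1 1 * A 1 0 = q⁻¹ ^ 2 • (A 1 0 * D 1 1) + (q⁻¹ ^ 2 - 1) • (A 1 1 * D 1 0)
  d11_mul_a11 : D 1 1 * A 1 1 = q⁻¹ ^ 2 • (A 1 1 * D 1 1)

/-- The quantum determinant of a `2 × 2` matrix, of which `detA` and `detD` are instances. -/
def qdet (q : K) (M : Matrix (Fin 2) (Fin 2) B) : B := M 0 0 * M 1 1 - q ^ 2 • (M 0 1 * M 1 0)

/-- The quantum adjugate of a `2 × 2` matrix, a two-sided inverse up to the factor `qdet q M`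
whenever `M` satisfies `ReflectionRelations q M`. -/
def qadjugate (q : K) (M : Matrix (Fin 2) (Fin 2) B) : Matrix (Fin 2) (Fin 2) B :=
  !![M 1 1, -(q ^ 2 • M 0 1);
    -(q ^ 2 • M 1 0), q ^ 2 • M 0 0 - (q ^ 2 - 1) • M 1 1]

variable {q : K} {M A D : Matrix (Fin 2) (Fin 2) B}

namespace ReflectionRelations

theorem mul_qadjugate (hq : q ≠ 0) (h : ReflectionRelations q M) :
    M * qadjugate q M = scalar (Fin 2) (qdet q M) := by
  ext i j
  rw [mul_apply, Fin.sum_univ_two]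
  fin_cases i <;> fin_cases j
  · change M 0 0 * M 1 1 + M 0 1 * -(q ^ 2 • M 1 0) = qdet q M
    rw [qdet, mul_neg, mul_smul_comm, sub_eq_add_neg]
  · change M 0 0 * -(q ^ 2 • M 0 1) + M 0 1 * (q ^ 2 • M 0 0 - (q ^ 2 - 1) • M 1 1) = 0
    simp only [mul_neg, mul_sub, mul_smul_comm, h.m01_mul_m00]
    match_scalars <;> field_simp <;> ring
  · change M 1 0 * M 1 1 + M 1 1 * -(q ^ 2 • M 1 0) = 0
    simp only [mul_neg, mul_smul_comm, h.m11_mul_m10]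
    match_scalars
    field_simp
    ring
  · change M 1 0 * -(q ^ 2 • M 0 1) + M 1 1 * (q ^ 2 • M 0 0 - (q ^ 2 - 1) • M 1 1) = qdet q M
    simp only [qdet, mul_neg, mul_sub, mul_smul_comm, h.m10_mul_m01, h.m11_mul_m00]
    match_scalars <;> field_simp <;> ring

theorem qadjugate_mul (hq : q ≠ 0) (h : ReflectionRelations q M) :
    qadjugate q M * M = scalar (Fin 2) (qdet q M) := by
  ext i j
  rw [mul_apply, Fin.sum_univ_two]
  fin_cases i <;> fin_cases j
  · change M 1 1 * M 0 0 + -(q ^ 2 • M 0 1) * M 1 0 = qdet q M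
    rw [qdet, neg_mul, smul_mul_assoc, h.m11_mul_m00, sub_eq_add_neg]
  · change M 1 1 * M 0 1 + -(q ^ 2 • M 0 1) * M 1 1 = 0
    rw [neg_mul, smul_mul_assoc, h.m11_mul_m01, add_neg_cancel]
  · change -(q ^ 2 • M 1 0) * M 0 0 + (q ^ 2 • M 0 0 - (q ^ 2 - 1) • M 1 1) * M 1 0 = 0
    simp only [neg_mul, sub_mul, smul_mul_assoc, h.m10_mul_m00]
    match_scalars <;> field_simp <;> ring
  · change -(q ^ 2 • M 1 0) * M 0 1 + (q ^ 2 • M 0 0 - (q ^ 2 - 1) • M 1 1) * M 1 1 = qdet q M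
    simp only [qdet, neg_mul, sub_mul, smul_mul_assoc, h.m10_mul_m01]
    match_scalars <;> field_simp <;> ring

theorem commute_qdet_apply (hq : q ≠ 0) (h : ReflectionRelations q M) (i j : Fin 2) :
    Commute (qdet q M) (M i j) := by
  have h_scalar_comm : scalar (Fin 2) (qdet q M) * M = M * scalar (Fin 2) (qdet q M) := by
    rw [← h.mul_qadjugate hq, Matrix.mul_assoc, h.qadjugate_mul hq, h.mul_qadjugate hq]
  simpa [Commute, SemiconjBy] using congr_fun₂ h_scalar_comm i j

theorem op_transpose (hq : q ≠ 0) (h : ReflectionRelations q M) :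
    ReflectionRelations q (Mᵀ.map op) := by
  constructor <;>
    simp only [map_apply, transpose_apply, ← op_mul, ← op_smul, ← op_add, ← op_sub, op_inj,
      h.m01_mul_m00, h.m11_mul_m00, h.m10_mul_m00, h.m11_mul_m01, h.m10_mul_m01, h.m11_mul_m10]
  all_goals match_scalars <;> field_simp <;> ring

theorem qdet_op_transpose (h : ReflectionRelations q M) : qdet q (Mᵀ.map op) = op (qdet q M) := by
  simp only [qdet, map_apply, transpose_apply, op_sub, op_smul, ← op_mul, h.m11_mul_m00]

end ReflectionRelations

namespace CrossRelations

theorem op_transpose (hq : q ≠ 0) (h : CrossRelations q A D) :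
    CrossRelations q (Dᵀ.map op) (Aᵀ.map op) := by
  constructor <;>
    simp only [map_apply, transpose_apply, ← op_mul, ← op_smul, ← op_add, ← op_sub, ← op_neg,
      op_inj, h.d00_mul_a00, h.d00_mul_a01, h.d00_mul_a10, h.d00_mul_a11, h.d01_mul_a00,
      h.d01_mul_a01, h.d01_mul_a10, h.d01_mul_a11, h.d10_mul_a00, h.d10_mul_a01, h.d10_mul_a10,
      h.d10_mul_a11, h.d11_mul_a00, h.d11_mul_a01, h.d11_mul_a10, h.d11_mul_a11]
  all_goals match_scalars <;> field_simp <;> ring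

theorem d00_mul_a11_eq_normal_ordered (hq : q ≠ 0) (h : CrossRelations q A D) :
    D 0 0 * A 1 1 = A 1 1 * D 0 0 + (1 - q ^ 2) • (A 0 1 * D 1 0) := by
  rw [h.d00_mul_a11, h.d10_mul_a01]
  match_scalars <;> field_simp
  ring

theorem d00_mul_a10_eq_normal_ordered (hq : q ≠ 0) (h : CrossRelations q A D) :
    D 0 0 * A 1 0 = A 1 0 * D 0 0 + (1 - q⁻¹ ^ 2) • (A 1 1 * D 1 0)
      + (q⁻¹ ^ 2 - 1) • (A 0 0 * D 1 0) := by
  rw [h.d00_mul_a10, h.d10_mul_a00]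
  match_scalars <;> field_simp
  ring

theorem qdet_mul_a00 (hq : q ≠ 0) (h : CrossRelations q A D) (hD : ReflectionRelations q D) :
    qdet q D * A 0 0 = q⁻¹ ^ 2 • (A 0 0 * qdet q D) := by
  have h_diag : D 0 0 * D 1 1 * A 0 0 = D 0 0 * A 0 0 * D 1 1
      + (1 - q ^ 2) • (D 0 0 * A 0 1 * D 1 0) := by
    rw [mul_assoc, h.d11_mul_a00]
    simp only [mul_add, mul_smul_comm, mul_assoc]
  have h_antidiag : D 0 1 * D 1 0 * A 0 0 = q⁻¹ ^ 2 • (D 0 1 * A 0 0 * D 1 0)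
      - (1 - q⁻¹ ^ 2) • (q⁻¹ ^ 2 • (D 0 1 * A 1 0 * D 1 1)
        + (q⁻¹ ^ 2 - 1) • (D 0 1 * A 1 1 * D 1 0)) := by
    rw [mul_assoc, h.d10_mul_a00, h.d11_mul_a10]
    simp only [mul_sub, mul_add, mul_smul_comm, mul_assoc]
  rw [h.d00_mul_a00, h.d00_mul_a01] at h_diag
  rw [h.d01_mul_a00] at h_antidiag
  simp only [qdet, sub_mul, add_mul, neg_mul, mul_sub, smul_mul_assoc, mul_smul_comm, h_diag,
    h_antidiag, mul_assoc, hD.m11_mul_m10]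
  match_scalars <;> field_simp <;> ring

theorem qdet_mul_a01 (hq : q ≠ 0) (h : CrossRelations q A D) :
    qdet q D * A 0 1 = q⁻¹ ^ 2 • (A 0 1 * qdet q D) := by
  have h_diag : D 0 0 * D 1 1 * A 0 1 =
      (q⁻¹ ^ 2 - 1) • (D 0 1 * A 1 1 * D 1 1) + q⁻¹ ^ 2 • (A 0 1 * D 0 0 * D 1 1) := by
    rw [mul_assoc, h.d11_mul_a01, ← mul_assoc, h.d00_mul_a01]
    simp only [add_mul, smul_mul_assoc]
  have h_antidiag : D 0 1 * D 1 0 * A 0 1 =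
      (q⁻¹ ^ 2 * (q⁻¹ ^ 2 - 1)) • (D 0 1 * A 1 1 * D 1 1) + q⁻¹ ^ 2 • (A 0 1 * D 0 1 * D 1 0) := by
    rw [mul_assoc, h.d10_mul_a01, mul_add, ← mul_assoc (D 0 1), h.d01_mul_a01, h.d11_mul_a11]
    simp only [mul_smul_comm, smul_mul_assoc, mul_assoc, smul_smul, mul_comm]
  simp only [qdet, sub_mul, mul_sub, smul_mul_assoc, mul_smul_comm, h_diag, h_antidiag, mul_assoc]
  match_scalars <;> field_simp
  ring

theorem qdet_mul_a10 (hq : q ≠ 0) (h : CrossRelations q A D) (hD : ReflectionRelations q D) :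
    qdet q D * A 1 0 = q⁻¹ ^ 2 • (A 1 0 * qdet q D) := by
  have h_diag : D 0 0 * D 1 1 * A 1 0 = q⁻¹ ^ 2 • (D 0 0 * A 1 0 * D 1 1)
      + (q⁻¹ ^ 2 - 1) • (D 0 0 * A 1 1 * D 1 0) := by
    rw [mul_assoc, h.d11_mul_a10]
    simp only [mul_add, mul_smul_comm, mul_assoc]
  have h_antidiag : D 0 1 * D 1 0 * A 1 0 = q⁻¹ ^ 2 • (D 0 1 * A 1 0 * D 1 0) := by
    rw [mul_assoc, h.d10_mul_a10, mul_smul_comm, mul_assoc]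
  rw [h.d00_mul_a10_eq_normal_ordered hq, h.d00_mul_a11_eq_normal_ordered hq] at h_diag
  rw [h.d01_mul_a10, h.d11_mul_a00] at h_antidiag
  simp only [qdet, sub_mul, add_mul, mul_sub, smul_mul_assoc, mul_smul_comm, h_diag, h_antidiag,
    mul_assoc, hD.m11_mul_m10]
  match_scalars <;> field_simp <;> ring

theorem qdet_mul_a11 (hq : q ≠ 0) (h : CrossRelations q A D) (hD : ReflectionRelations q D) :
    qdet q D * A 1 1 = q⁻¹ ^ 2 • (A 1 1 * qdet q D) := by
  have h_diag : D 0 0 * D 1 1 * A 1 1 =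
      q⁻¹ ^ 2 • (A 1 1 * D 0 0 * D 1 1) + (q⁻¹ ^ 2 - 1) • (A 0 1 * D 1 0 * D 1 1) := by
    rw [mul_assoc, h.d11_mul_a11, mul_smul_comm, ← mul_assoc, h.d00_mul_a11_eq_normal_ordered hq]
    simp only [add_mul, smul_mul_assoc]
    match_scalars <;> field_simp
  have h_antidiag : D 0 1 * D 1 0 * A 1 1 =
      q⁻¹ ^ 2 • (A 1 1 * D 0 1 * D 1 0) + (q⁻¹ ^ 2 - 1) • (A 0 1 * D 1 1 * D 1 0) := by
    rw [mul_assoc, h.d10_mul_a11, ← mul_assoc, h.d01_mul_a11, h.d11_mul_a01]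
    simp only [add_mul, smul_mul_assoc, add_comm]
  simp only [qdet, sub_mul, mul_sub, smul_mul_assoc, mul_smul_comm, h_diag, h_antidiag, mul_assoc,
    hD.m11_mul_m10]
  match_scalars <;> field_simp
  ring

theorem qdet_mul_apply (hq : q ≠ 0) (h : CrossRelations q A D) (hD : ReflectionRelations q D)
    (i j : Fin 2) : qdet q D * A i j = q⁻¹ ^ 2 • (A i j * qdet q D) := by
  fin_cases i <;> fin_cases j
  exacts [h.qdet_mul_a00 hq hD, h.qdet_mul_a01 hq, h.qdet_mul_a10 hq hD, h.qdet_mul_a11 hq hD]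

theorem apply_mul_qdet (hq : q ≠ 0) (h : CrossRelations q A D) (hA : ReflectionRelations q A)
    (i j : Fin 2) : D i j * qdet q A = q⁻¹ ^ 2 • (qdet q A * D i j) := by
  have h_op := (h.op_transpose hq).qdet_mul_apply hq (hA.op_transpose hq) j i
  rw [hA.qdet_op_transpose] at h_op
  exact op_injective h_op

end CrossRelations

end Relations

namespace DqPlus

open Matrix

variable (q : ℂ)

theorem reflectionRelations_aM : ReflectionRelations q (of (aM q)) := by
  constructor
  all_goals
    simp only [of_apply, aM, a11, a12, a21, a22, cons_val, ← map_mul, ← map_add, ← map_sub,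
      ← map_smul]
    exact RingQuot.mkAlgHom_rel ℂ (by constructor)

theorem reflectionRelations_pM : ReflectionRelations q (of (pM q)) := by
  constructor
  all_goals
    simp only [of_apply, pM, p11, p12, p21, p22, cons_val, ← map_mul, ← map_add, ← map_sub,
      ← map_smul]
    exact RingQuot.mkAlgHom_rel ℂ (by constructor)

theorem crossRelations : CrossRelations q (of (aM q)) (of (pM q)) := by
  constructor
  all_goals
    simp only [of_apply, aM, pM, a11, a12, a21, a22, p11, p12, p21, p22, cons_val, ← map_mul,
      ← map_add, ← map_sub, ← map_neg, ← map_smul]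
    exact RingQuot.mkAlgHom_rel ℂ (by constructor)

theorem adjoin_entries_eq_top :
    Algebra.adjoin ℂ (Set.range (Function.uncurry (aM q)) ∪ Set.range (Function.uncurry (pM q))) =
      ⊤ := by
  rw [eq_top_iff, ← (AlgHom.range_eq_top _).2 (RingQuot.mkAlgHom_surjective ℂ (QRel q)),
    ← Algebra.map_top, ← FreeAlgebra.adjoin_range_ι, AlgHom.map_adjoin]
  refine Algebra.adjoin_mono ?_
  rintro _ ⟨_, ⟨g, rfl⟩, rfl⟩
  cases g
  exacts [.inl ⟨(0, 0), rfl⟩, .inl ⟨(0, 1), rfl⟩, .inl ⟨(1, 0), rfl⟩, .inl ⟨(1, 1), rfl⟩,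
    .inr ⟨(0, 0), rfl⟩, .inr ⟨(0, 1), rfl⟩, .inr ⟨(1, 0), rfl⟩, .inr ⟨(1, 1), rfl⟩]

variable {q}

theorem commute_detA_aM (hq : q ≠ 0) (i j : Fin 2) : Commute (detA q) (aM q i j) :=
  (reflectionRelations_aM q).commute_qdet_apply hq i j

theorem commute_detD_pM (hq : q ≠ 0) (i j : Fin 2) : Commute (detD q) (pM q i j) :=
  (reflectionRelations_pM q).commute_qdet_apply hq i j

theorem detD_mul_aM (hq : q ≠ 0) (i j : Fin 2) :
    detD q * aM q i j = q⁻¹ ^ 2 • (aM q i j * detD q) :=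
  (crossRelations q).qdet_mul_apply hq (reflectionRelations_pM q) i j

theorem pM_mul_detA (hq : q ≠ 0) (i j : Fin 2) :
    pM q i j * detA q = q⁻¹ ^ 2 • (detA q * pM q i j) :=
  (crossRelations q).apply_mul_qdet hq (reflectionRelations_aM q) i j

theorem detA_mem_normalElements (hq : q ≠ 0) : detA q ∈ normalElements (DqPlus q) := by
  refine mem_normalElements_of_adjoin_eq_top (adjoin_entries_eq_top q) ?_
  rintro _ (⟨⟨i, j⟩, rfl⟩ | ⟨⟨i, j⟩, rfl⟩)
  · exact mem_normalizedSubalgebra_of_commute (commute_detA_aM hq i j)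
  · exact mem_normalizedSubalgebra_of_right_mul_eq_smul (by simpa using hq) (pM_mul_detA hq i j)

theorem detD_mem_normalElements (hq : q ≠ 0) : detD q ∈ normalElements (DqPlus q) := by
  refine mem_normalElements_of_adjoin_eq_top (adjoin_entries_eq_top q) ?_
  rintro _ (⟨⟨i, j⟩, rfl⟩ | ⟨⟨i, j⟩, rfl⟩)
  · exact mem_normalizedSubalgebra_of_left_mul_eq_smul (by simpa using hq) (detD_mul_aM hq i j)
  · exact mem_normalizedSubalgebra_of_commute (commute_detD_pM hq i j)

end DqPlus

/-- In `𝒟q⁺(GL₂)`, for all `i, j ∈ {1,2}`: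
`det_q(A)·a^i_j = a^i_j·det_q(A)`; `det_q(D)·a^i_j = q⁻²·a^i_j·det_q(D)`;
`∂^i_j·det_q(A) = q⁻²·det_q(A)·∂^i_j`; `∂^i_j·det_q(D) = det_q(D)·∂^i_j`.
Consequently, the multiplicative set `{det_q(A)^m det_q(D)^n : m, n ∈ ℕ₀}` satisfies
the two-sided Ore condition in `𝒟q⁺(GL₂)`. -/
theorem stmt12 (q : ℂ) (hq : q ≠ 0) :
    (∀ i j : Fin 2,
      detA q * aM q i j = aM q i j * detA q ∧
      detD q * aM q i j = (q⁻¹ ^ 2) • (aM q i j * detD q) ∧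
      pM q i j * detA q = (q⁻¹ ^ 2) • (detA q * pM q i j) ∧
      pM q i j * detD q = detD q * pM q i j) ∧
    (∀ x : DqPlus q, ∀ m n : ℕ,
      (∃ x' : DqPlus q, ∃ m' n' : ℕ,
        (detA q ^ m' * detD q ^ n') * x = x' * (detA q ^ m * detD q ^ n)) ∧
      (∃ x'' : DqPlus q, ∃ m'' n'' : ℕ,
        x * (detA q ^ m'' * detD q ^ n'') = (detA q ^ m * detD q ^ n) * x'')) := by
  refine ⟨fun i j ↦ ⟨DqPlus.commute_detA_aM hq i j, DqPlus.detD_mul_aM hq i j,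
    DqPlus.pM_mul_detA hq i j, (DqPlus.commute_detD_pM hq i j).symm⟩, fun x m n ↦ ?_⟩
  have h_normal : detA q ^ m * detD q ^ n ∈ normalElements (DqPlus q) :=
    mul_mem (pow_mem (DqPlus.detA_mem_normalElements hq) m)
      (pow_mem (DqPlus.detD_mem_normalElements hq) n)
  obtain ⟨⟨x', hx'⟩, x'', hx''⟩ := h_normal x
  exact ⟨⟨x', m, n, hx'⟩, x'', m, n, hx''.symm⟩
end
end

section
/- In the 2×2 matrices over 𝒟q⁺(GL₂) one has AÃ = ÃA = det_q(A)·I and DD̃ = D̃D = det_q(D)·I, where I is the identity matrix. -/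
/-!
After clearing the powers of `q⁻¹`, the defining relations among the entries of `A` say precisely
that the entries of `A Ã` and `Ã A` agree with those of `det_q(A) I`; the top left entry of `A Ã` is
`det_q(A)` by definition. The relations among the `∂`s have the same form, so both pairs of
identities are instances of one statement about a `2 × 2` matrix over an arbitrary algebra.
-/

noncomputable section

/-- The matrix `A = (a^i_j)`. -/
def Amat (q : ℂ) : Matrix (Fin 2) (Fin 2) (DqPlus q) :=
  !![a11 q, a12 q; a21 q, a22 q]

/-- The matrix `D = (∂^i_j)`. -/
def Dmat (q : ℂ) : Matrix (Fin 2) (Fin 2) (DqPlus q) :=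
  !![p11 q, p12 q; p21 q, p22 q]

/-- The quantum adjugate matrix `Ã = [[a²₂, −q²a¹₂], [−q²a²₁, q²a¹₁ + (1−q²)a²₂]]`. -/
def Atil (q : ℂ) : Matrix (Fin 2) (Fin 2) (DqPlus q) :=
  !![a22 q, -((q ^ 2) • a12 q); -((q ^ 2) • a21 q), (q ^ 2) • a11 q + (1 - q ^ 2) • a22 q]

/-- The quantum adjugate matrix `D̃ = [[∂²₂, −q²∂¹₂], [−q²∂²₁, q²∂¹₁ + (1−q²)∂²₂]]`. -/
def Dtil (q : ℂ) : Matrix (Fin 2) (Fin 2) (DqPlus q) :=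
  !![p22 q, -((q ^ 2) • p12 q); -((q ^ 2) • p21 q), (q ^ 2) • p11 q + (1 - q ^ 2) • p22 q]

section ReflectionEquation

variable {k R : Type*} [CommRing k] [Ring R] [Algebra k R] {q : k}
  {M : Matrix (Fin 2) (Fin 2) R}

/-- The entries of `M` satisfy the relations of the `2 × 2` reflection equation algebra, the ones
shared by `A` and `D`. They are stated without `q⁻¹`, so that `q` may be any scalar of a
commutative ring. -/
structure IsReflectionMatrix (q : k) (M : Matrix (Fin 2) (Fin 2) R) : Prop where
  comm_01_00 : q ^ 2 • (M 0 1 * M 0 0 - M 0 0 * M 0 1) = (q ^ 2 - 1) • (M 0 1 * M 1 1)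
  comm_11_00 : M 1 1 * M 0 0 = M 0 0 * M 1 1
  comm_10_00 : q ^ 2 • (M 1 0 * M 0 0 - M 0 0 * M 1 0) = (1 - q ^ 2) • (M 1 1 * M 1 0)
  comm_11_01 : M 1 1 * M 0 1 = q ^ 2 • (M 0 1 * M 1 1)
  comm_10_01 : q ^ 2 • (M 1 0 * M 0 1 - M 0 1 * M 1 0) =
    (q ^ 2 - 1) • (M 0 0 * M 1 1 - M 1 1 * M 1 1)
  comm_10_11 : M 1 0 * M 1 1 = q ^ 2 • (M 1 1 * M 1 0)

/-- The quantum determinant of a `2 × 2` matrix, generalizing `detA` and `detD`. -/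
def qDet (q : k) (M : Matrix (Fin 2) (Fin 2) R) : R :=
  M 0 0 * M 1 1 - q ^ 2 • (M 0 1 * M 1 0)

/-- The quantum adjugate of a `2 × 2` matrix, generalizing `Atil` and `Dtil`. -/
def qAdjugate (q : k) (M : Matrix (Fin 2) (Fin 2) R) : Matrix (Fin 2) (Fin 2) R :=
  !![M 1 1, -(q ^ 2 • M 0 1); -(q ^ 2 • M 1 0), q ^ 2 • M 0 0 + (1 - q ^ 2) • M 1 1]

namespace IsReflectionMatrix

theorem mul_qAdjugate (h : IsReflectionMatrix q M) :
    M * qAdjugate q M = Matrix.diagonal fun _ => qDet q M := by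
  have h00 : M 0 0 * M 1 1 + M 0 1 * -(q ^ 2 • M 1 0) = qDet q M := by
    rw [qDet, mul_neg, mul_smul_comm, sub_eq_add_neg]
  have h01 : M 0 0 * -(q ^ 2 • M 0 1) + M 0 1 * (q ^ 2 • M 0 0 + (1 - q ^ 2) • M 1 1) = 0 := by
    simp only [mul_add, mul_neg, mul_smul_comm]
    linear_combination (norm := module) h.comm_01_00
  have h10 : M 1 0 * M 1 1 + M 1 1 * -(q ^ 2 • M 1 0) = 0 := by
    rw [h.comm_10_11, mul_neg, mul_smul_comm, add_neg_cancel]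
  have h11 : M 1 0 * -(q ^ 2 • M 0 1) + M 1 1 * (q ^ 2 • M 0 0 + (1 - q ^ 2) • M 1 1) =
      qDet q M := by
    simp only [qDet, mul_add, mul_neg, mul_smul_comm]
    linear_combination (norm := module) q ^ 2 • h.comm_11_00 - h.comm_10_01
  simp only [← Matrix.ext_iff, Fin.forall_fin_two, Matrix.mul_apply, Fin.sum_univ_two]
  exact ⟨⟨h00, h01⟩, h10, h11⟩

theorem qAdjugate_mul (h : IsReflectionMatrix q M) :
    qAdjugate q M * M = Matrix.diagonal fun _ => qDet q M := by
  have h00 : M 1 1 * M 0 0 + -(q ^ 2 • M 0 1) * M 1 0 = qDet q M := by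
    rw [qDet, h.comm_11_00, neg_mul, smul_mul_assoc, sub_eq_add_neg]
  have h01 : M 1 1 * M 0 1 + -(q ^ 2 • M 0 1) * M 1 1 = 0 := by
    rw [h.comm_11_01, neg_mul, smul_mul_assoc, add_neg_cancel]
  have h10 : -(q ^ 2 • M 1 0) * M 0 0 + (q ^ 2 • M 0 0 + (1 - q ^ 2) • M 1 1) * M 1 0 = 0 := by
    simp only [add_mul, neg_mul, smul_mul_assoc]
    linear_combination (norm := module) -h.comm_10_00
  have h11 : -(q ^ 2 • M 1 0) * M 0 1 + (q ^ 2 • M 0 0 + (1 - q ^ 2) • M 1 1) * M 1 1 =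
      qDet q M := by
    simp only [qDet, add_mul, neg_mul, smul_mul_assoc]
    linear_combination (norm := module) -h.comm_10_01
  simp only [← Matrix.ext_iff, Fin.forall_fin_two, Matrix.mul_apply, Fin.sum_univ_two]
  exact ⟨⟨h00, h01⟩, h10, h11⟩

section Presentation

variable {K F : Type*} [Field K] [Ring F] [Algebra K F] {q : K} {r : F → F → Prop} {a b c d : F}

theorem of_inv_relations (hq : q ≠ 0)
    (hba : b * a = a * b + (1 - q⁻¹ ^ 2) • (b * d))
    (hda : d * a = a * d)
    (hca : c * a = a * c - (1 - q⁻¹ ^ 2) • (d * c))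
    (hdb : d * b = q ^ 2 • (b * d))
    (hcb : c * b = b * c + (1 - q⁻¹ ^ 2) • (a * d - d * d))
    (hdc : d * c = q⁻¹ ^ 2 • (c * d)) :
    IsReflectionMatrix q !![a, b; c, d] := by
  have hq_inv : q ^ 2 * q⁻¹ ^ 2 = 1 := by rw [← mul_pow, mul_inv_cancel₀ hq, one_pow]
  have hq_sub : q ^ 2 * (1 - q⁻¹ ^ 2) = q ^ 2 - 1 := by rw [mul_sub, hq_inv, mul_one]
  exact
    { comm_01_00 := show q ^ 2 • (b * a - a * b) = (q ^ 2 - 1) • (b * d) by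
        rw [hba, add_sub_cancel_left, smul_smul, hq_sub]
      comm_11_00 := hda
      comm_10_00 := show q ^ 2 • (c * a - a * c) = (1 - q ^ 2) • (d * c) by
        rw [hca, sub_sub_cancel_left, smul_neg, smul_smul, hq_sub, ← neg_smul, neg_sub]
      comm_11_01 := hdb
      comm_10_01 := show q ^ 2 • (c * b - b * c) = (q ^ 2 - 1) • (a * d - d * d) by
        rw [hcb, add_sub_cancel_left, smul_smul, hq_sub]
      comm_10_11 := show c * d = q ^ 2 • (d * c) by
        rw [hdc, smul_smul, hq_inv, one_smul] }

theorem of_ringQuot_relations (hq : q ≠ 0)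
    (hba : r (b * a) (a * b + (1 - q⁻¹ ^ 2) • (b * d)))
    (hda : r (d * a) (a * d))
    (hca : r (c * a) (a * c - (1 - q⁻¹ ^ 2) • (d * c)))
    (hdb : r (d * b) (q ^ 2 • (b * d)))
    (hcb : r (c * b) (b * c + (1 - q⁻¹ ^ 2) • (a * d - d * d)))
    (hdc : r (d * c) (q⁻¹ ^ 2 • (c * d))) :
    IsReflectionMatrix q !![RingQuot.mkAlgHom K r a, RingQuot.mkAlgHom K r b;
      RingQuot.mkAlgHom K r c, RingQuot.mkAlgHom K r d] := by
  apply of_inv_relations hq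
  all_goals
    simp only [← map_mul, ← map_smul, ← map_add, ← map_sub]
    apply RingQuot.mkAlgHom_rel
    assumption

end Presentation

end IsReflectionMatrix

end ReflectionEquation

theorem isReflectionMatrix_Amat {q : ℂ} (hq : q ≠ 0) : IsReflectionMatrix q (Amat q) :=
  .of_ringQuot_relations hq .a1 .a2 .a3 .a4 .a5 .a6

theorem isReflectionMatrix_Dmat {q : ℂ} (hq : q ≠ 0) : IsReflectionMatrix q (Dmat q) :=
  .of_ringQuot_relations hq .p1 .p2 .p3 .p4 .p5 .p6

/-- In the 2×2 matrices over `𝒟q⁺(GL₂)` one has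
`AÃ = ÃA = det_q(A)·I` and `DD̃ = D̃D = det_q(D)·I`. -/
theorem stmt14 (q : ℂ) (hq : q ≠ 0) :
    Amat q * Atil q = Matrix.diagonal (fun _ => detA q) ∧
    Atil q * Amat q = Matrix.diagonal (fun _ => detA q) ∧
    Dmat q * Dtil q = Matrix.diagonal (fun _ => detD q) ∧
    Dtil q * Dmat q = Matrix.diagonal (fun _ => detD q) :=
  ⟨(isReflectionMatrix_Amat hq).mul_qAdjugate, (isReflectionMatrix_Amat hq).qAdjugate_mul,
    (isReflectionMatrix_Dmat hq).mul_qAdjugate, (isReflectionMatrix_Dmat hq).qAdjugate_mul⟩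
end
end
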